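/- There exists an absolute constant γ₀ > 0 such that for every constant ε ∈ (0,1) and every ρ > 0 there exists m₀ such that for all m ≥ m₀ and all r with 1 ≤ r < γ₀·m the following holds. Set K = ⌊(1-ε)·binom(m,≤r)⌋ and let Z be a uniformly random K-element subset of F₂^m. Then with probability at least 1 - ρ: for every multilinear polynomial P in m variables over F₂ of total degree at most m-2r-2 and every vector e ∈ F₂^{F₂^m} whose support is contained in Z, the evaluation vector of P is the unique codeword of RM(m, m-2r-2) at minimal Hamming distance from (evaluation vector of P) + e. (That is, RM(m,m-2r-2) uniquely decodes from the K random errors indexed by Z.) -/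

import Mathlib

/-- `binomLe m r = ∑_{i=0}^r C(m,i)`, written `binom(m, ≤ r)`. -/
def binomLe (m r : ℕ) : ℕ := ∑ i ∈ Finset.range (r + 1), Nat.choose m i

/-- Index type for multilinear monomials of degree at most `r` in `m` variables:
subsets `S ⊆ {1,…,m}` with `|S| ≤ r`. -/
abbrev MonIdx (m r : ℕ) := {S : Finset (Fin m) // S.card ≤ r}

/-- `RM(m,r)` as the space of coefficient vectors of multilinear polynomials in `m`
variables of total degree at most `r` over `F₂`. -/
abbrev RMcode (m r : ℕ) := MonIdx m r → ZMod 2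

/-- Evaluation of a polynomial (given by its coefficients) at the point `z`,
as a linear map: `c ↦ ∑_{|S| ≤ r} c_S ∏_{i ∈ S} z_i`. -/
def evalLin (m r : ℕ) (z : Fin m → ZMod 2) : RMcode m r →ₗ[ZMod 2] ZMod 2 :=
  ∑ S : MonIdx m r, (∏ i ∈ S.1, z i) • LinearMap.proj S

/-- The degree-`r` vanishing space `I_r(Z)` of the set `Z ⊆ F₂^m`. -/
def vanishing (m r : ℕ) (Z : Set (Fin m → ZMod 2)) : Submodule (ZMod 2) (RMcode m r) :=
  ⨅ z ∈ Z, LinearMap.ker (evalLin m r z)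

/-- The vector `z^{(r)}` of evaluations at `z` of all multilinear monomials of degree `≤ r`. -/
def monVec (m r : ℕ) (z : Fin m → ZMod 2) : MonIdx m r → ZMod 2 := fun S => ∏ i ∈ S.1, z i

/-- Fractional Hamming weight of the polynomial with coefficients `c`. -/
noncomputable def wt (m r : ℕ) (c : RMcode m r) : ℝ :=
  ((Finset.univ.filter (fun z : Fin m → ZMod 2 => evalLin m r z c ≠ 0)).card : ℝ) / 2 ^ m

/-- The number of zeros in `F₂^m` of the polynomial with coefficients `c`,
i.e. `(1 - wt(P)) · 2^m`. -/
def numZeros (m r : ℕ) (c : RMcode m r) : ℕ :=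
  (Finset.univ.filter (fun z : Fin m → ZMod 2 => evalLin m r z c = 0)).card

/-- The degree-`r` closure of `Z ⊆ F₂^m`. -/
def closureSet (m r : ℕ) (Z : Set (Fin m → ZMod 2)) : Set (Fin m → ZMod 2) :=
  {u | ∀ c ∈ vanishing m r Z, evalLin m r u c = 0}

/-! **Reduction to independence.** Suppose that `p` and `p'` in `RM(m, m - 2r - 2)` differ by `d`,
and that `e` and `e + d` have supports `S` and `T` with `#T ≤ #S`. The sum of a polynomial of degree
less than `m` over the cube vanishes, so `d` is orthogonal to all products `f g q` with
`deg f, deg g ≤ r` and `deg q ≤ 1`, and the sums of `f g q` over `S` and over `T` agree. If `S` is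
an independent set of coordinates of `RM(m, r)`, then dual bases show `S = T`, that is `d = 0`. It
thus suffices that a random `K`-set `Z` is independent with high probability.

**Reduction to a weight enumerator bound.** Put `N = dim RM(m, r)`. The number of codewords of
`RM(m, r)` that vanish on `Z` is `2 ^ (N - K)` if `Z` is independent, and at least twice that if
not. On average over `Z` this number is at most `2 ^ (-K) ∑ f, (1 + bias f) ^ K`, so it suffices to
show that `∑ f, (1 + bias f) ^ K ≤ (1 + ρ) 2 ^ N`. The codewords are split by their bias.

* The bias is large, at least `2⁻⁹`. Such a word is determined, up to a word of small weight, by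
  boundedly many of its derivatives, through a majority vote; a word of small weight by boundedly
  many derivatives of small weight and a word of still smaller weight. Derivatives lower the
  degree, so these words are so few that the factor `2 ^ (-ε N)` pays for them.
* The bias is about `2⁻ˡ` for an intermediate `l`. An even moment of the bias is the probability
  that random points sum to zero under every codeword. Splitting the coordinates into two blocks
  turns this into a statement on dual words of `RM(n, r - 1)` at random points, and the rank at
  random points is large because every set of `2 ^ k` points has rank at least `binom(k, ≤ r - 1)`.
* The bias is below about `N⁻²`. Then `(1 + bias f) ^ K` is at most `1 + o(1)`.
-/

namespace ReedMuller

open Finset Module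

section Interpolation

variable {F α ι κ : Type*} [Field F] {V : Submodule F (α → F)} {S T : Finset α}

/-- The code `V` on the coordinates `u i`: the space of words `f ∘ u` with `f ∈ V`. -/
def restrictTo (V : Submodule F (α → F)) (u : ι → α) : Submodule F (ι → F) :=
  V.map (LinearMap.funLeft F F u)

/-- `T` is an independent set of coordinates of the code `V`: every prescription of values on `T`
is attained by a codeword. -/
def Interpolates (V : Submodule F (α → F)) (T : Finset α) : Prop :=
  ∀ φ : α → F, ∃ f ∈ V, ∀ x ∈ T, f x = φ x

theorem Interpolates.subset (hT : Interpolates V T) (hST : S ⊆ T) : Interpolates V S := fun φ =>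
  let ⟨f, hf, hfT⟩ := hT φ
  ⟨f, hf, fun x hx => hfT x (hST hx)⟩

theorem interpolates_empty : Interpolates V ∅ := fun _ => ⟨0, V.zero_mem, by simp⟩

theorem interpolates_iff_restrictTo_eq_top :
    Interpolates V T ↔ restrictTo V ((↑) : T → α) = ⊤ := by
  classical
  refine ⟨fun hT => eq_top_iff.2 fun φ _ => ?_, fun hT φ => ?_⟩
  · obtain ⟨f, hf, hfT⟩ := hT fun x => if hx : x ∈ T then φ ⟨x, hx⟩ else 0
    exact ⟨f, hf, funext fun x => (hfT x x.2).trans (dif_pos x.2)⟩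
  · obtain ⟨f, hf, hfφ⟩ : (fun x : T => φ x) ∈ restrictTo V ((↑) : T → α) := hT ▸ trivial
    exact ⟨f, hf, fun x hx => congrFun hfφ ⟨x, hx⟩⟩

theorem finrank_restrictTo_le [Fintype ι] (u : ι → α) :
    finrank F (restrictTo V u) ≤ Fintype.card ι :=
  (Submodule.finrank_le _).trans_eq (finrank_fintype_fun_eq_card F)

theorem interpolates_iff_card_le_finrank :
    Interpolates V T ↔ #T ≤ finrank F (restrictTo V ((↑) : T → α)) := by
  have hcard : finrank F (T → F) = #T := by simp
  rw [interpolates_iff_restrictTo_eq_top]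
  refine ⟨fun h => by rw [h, finrank_top, hcard], fun h => ?_⟩
  exact Submodule.eq_top_of_finrank_eq ((Submodule.finrank_le _).antisymm (hcard.trans_le h))

theorem Interpolates.card_le_finrank [FiniteDimensional F V] (hT : Interpolates V T) :
    #T ≤ finrank F V :=
  (interpolates_iff_card_le_finrank.1 hT).trans (Submodule.finrank_map_le _ _)

/-- The codewords of `V` that vanish at every point of `T`. -/
def vanishingOn (V : Submodule F (α → F)) (T : Finset α) : Submodule F V :=
  LinearMap.ker ((LinearMap.funLeft F F ((↑) : T → α)).domRestrict V)

theorem mem_vanishingOn {f : V} : f ∈ vanishingOn V T ↔ ∀ x ∈ T, f.1 x = 0 := by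
  simp [vanishingOn, funext_iff, LinearMap.funLeft_apply]

theorem finrank_restrictTo_add_finrank_vanishingOn [FiniteDimensional F V] (T : Finset α) :
    finrank F (restrictTo V ((↑) : T → α)) + finrank F (vanishingOn V T) = finrank F V := by
  rw [← LinearMap.finrank_range_add_finrank_ker
    ((LinearMap.funLeft F F ((↑) : T → α)).domRestrict V), LinearMap.range_domRestrict]
  rfl

theorem finrank_restrictTo_le_of_vanishingOn_le [FiniteDimensional F V]
    (h : vanishingOn V T ≤ vanishingOn V S) :
    finrank F (restrictTo V ((↑) : S → α)) ≤ finrank F (restrictTo V ((↑) : T → α)) := by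
  have hS := finrank_restrictTo_add_finrank_vanishingOn (V := V) S
  have hT := finrank_restrictTo_add_finrank_vanishingOn (V := V) T
  have := Submodule.finrank_mono h
  omega

theorem Interpolates.card_le_card [FiniteDimensional F V] (hS : Interpolates V S)
    (h : vanishingOn V T ≤ vanishingOn V S) : #S ≤ #T :=
  (interpolates_iff_card_le_finrank.1 hS).trans <|
    (finrank_restrictTo_le_of_vanishingOn_le h).trans <|
      (finrank_restrictTo_le _).trans_eq (Fintype.card_coe T)

theorem Interpolates.of_card_le [FiniteDimensional F V] (hS : Interpolates V S)
    (h : vanishingOn V T ≤ vanishingOn V S) (hTS : #T ≤ #S) : Interpolates V T :=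
  interpolates_iff_card_le_finrank.2 <| hTS.trans <|
    (interpolates_iff_card_le_finrank.1 hS).trans (finrank_restrictTo_le_of_vanishingOn_le h)

theorem Interpolates.insert [DecidableEq α] {a : α} {f : α → F} (hT : Interpolates V T)
    (hf : f ∈ V) (hfT : ∀ x ∈ T, f x = 0) (hfa : f a ≠ 0) : Interpolates V (insert a T) := by
  intro φ
  obtain ⟨g, hg, hgT⟩ := hT φ
  refine ⟨g + ((φ a - g a) / f a) • f, V.add_mem hg (V.smul_mem _ hf), fun x hx => ?_⟩
  rcases mem_insert.1 hx with rfl | hx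
  · simp [div_mul_cancel₀ _ hfa]
  · simp [hfT x hx, hgT x hx]

theorem exists_interpolates_subset_vanishingOn_le (V : Submodule F (α → F)) (A : Finset α) :
    ∃ T ⊆ A, Interpolates V T ∧ vanishingOn V T ≤ vanishingOn V A := by
  classical
  obtain ⟨T, hT, hmax⟩ := exists_max_image (A.powerset.filter (Interpolates V)) card
    ⟨∅, by simpa using interpolates_empty⟩
  rw [mem_filter, mem_powerset] at hT
  refine ⟨T, hT.1, hT.2, fun f hf => mem_vanishingOn.2 fun a ha => ?_⟩
  rw [mem_vanishingOn] at hf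
  by_contra hfa
  have haT : a ∉ T := fun haT => hfa (hf a haT)
  have hins := hmax (Insert.insert a T) <| mem_filter.2
    ⟨mem_powerset.2 (insert_subset ha hT.1), hT.2.insert f.2 hf hfa⟩
  rw [card_insert_of_notMem haT] at hins
  omega

theorem card_vanishingOn_mul [Finite F] [FiniteDimensional F V] (T : Finset α) :
    Nat.card (vanishingOn V T) * Nat.card F ^ finrank F (restrictTo V ((↑) : T → α)) =
      Nat.card F ^ finrank F V := by
  rw [Module.natCard_eq_pow_finrank (K := F), ← pow_add, add_comm,
    finrank_restrictTo_add_finrank_vanishingOn]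

/-- The dual code of `W`: the words orthogonal to all codewords for the dot product. -/
def dualCode [Fintype ι] (W : Submodule F (ι → F)) : Submodule F (ι → F) :=
  ⨅ f ∈ W, LinearMap.ker (dotProductBilin F F f)

theorem mem_dualCode [Fintype ι] {W : Submodule F (ι → F)} {a : ι → F} :
    a ∈ dualCode W ↔ ∀ f ∈ W, ∑ i, f i * a i = 0 := by
  simp [dualCode, dotProduct]

theorem finrank_add_finrank_dualCode [Fintype ι] (W : Submodule F (ι → F)) :
    finrank F W + finrank F (dualCode W) = Fintype.card ι := by
  classical
  have hdual : dualCode W = W.dualAnnihilator.comap (dotProductEquiv F ι).toLinearMap := by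
    ext a
    simp [mem_dualCode, Submodule.mem_dualAnnihilator, dotProduct, mul_comm]
  rw [hdual, ← finrank_fintype_fun_eq_card F, ← Subspace.finrank_add_finrank_dualAnnihilator_eq W,
    Submodule.comap_equiv_eq_map_symm, LinearEquiv.finrank_map_eq]

end Interpolation

section Determination

variable {F α : Type*} [Field F] {V : Submodule F (α → F)} {Q : Set (α → F)} {S T : Finset α}

/-- The dual basis of `S` tests membership in `T`: pairing it with the dual basis of `T` shows
that each point of `S` agrees with a point of `T` on all of `Q`. -/
theorem eq_of_sum_mul_eq [FiniteDimensional F V] (hS : Interpolates V S) (hTS : #T ≤ #S)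
    (hV : 1 ∈ V) (hQ : 1 ∈ Q) (hsep : ∀ x y, (∀ q ∈ Q, q x = q y) → x = y)
    (hsum : ∀ f ∈ V, ∀ g ∈ V, ∀ q ∈ Q, ∑ x ∈ S, f x * g x * q x = ∑ x ∈ T, f x * g x * q x) :
    S = T := by
  classical
  choose f hfV hfS using fun z : α => hS (Pi.single z 1)
  have hdual_S : ∀ z ∈ S, ∀ g ∈ V, ∀ q ∈ Q, ∑ x ∈ T, f z x * g x * q x = g z * q z := by
    intro z hz g hg q hq
    rw [← hsum _ (hfV z) g hg q hq, sum_congr rfl fun x hx => by rw [hfS z x hx]]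
    simp [Pi.single_apply, hz]
  have hT : Interpolates V T := by
    refine hS.of_card_le (fun g hg => mem_vanishingOn.2 fun z hz => ?_) hTS
    have h := hdual_S z hz g g.2 1 hQ
    rw [sum_eq_zero fun x hx => by rw [mem_vanishingOn.1 hg x hx, mul_zero, zero_mul]] at h
    simpa using h.symm
  choose h hhV hhT using fun t : α => hT (Pi.single t 1)
  have hdual_T : ∀ z ∈ S, ∀ t ∈ T, ∀ q ∈ Q, f z t * q t = h t z * q z := by
    intro z hz t ht q hq
    rw [← hdual_S z hz (h t) (hhV t) q hq, sum_congr rfl fun x hx => by rw [hhT t x hx]]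
    simp [Pi.single_apply, ht]
  refine eq_of_subset_of_card_le (fun z hz => ?_) hTS
  obtain ⟨t, ht, hft⟩ : ∃ t ∈ T, f z t ≠ 0 := by
    by_contra! hzero
    have h1 := hdual_S z hz 1 hV 1 hQ
    rw [sum_eq_zero fun x hx => by rw [hzero x hx, zero_mul, zero_mul]] at h1
    simp at h1
  have hfh : f z t = h t z := by simpa using hdual_T z hz t ht 1 hQ
  have hzt : z = t := hsep z t fun q hq =>
    mul_left_cancel₀ hft (by rw [hdual_T z hz t ht q hq, hfh])
  rwa [hzt]

end Determination

section Polynomials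

open scoped fwdDiff

variable {m n s : ℕ} {f g : (Fin m → ZMod 2) → ZMod 2}

theorem eq_zero_or_eq_one : ∀ a : ZMod 2, a = 0 ∨ a = 1 := by decide

/-- The discrete cube `F₂^m`, the index set of the codes `RM(m, d)`. -/
abbrev Cube (m : ℕ) := Fin m → ZMod 2

/-- The multilinear monomial `∏ i ∈ S, x i` as a function on the cube. -/
def monom (S : Finset (Fin m)) (x : Cube m) : ZMod 2 := ∏ i ∈ S, x i

/-- The code `RM(m, s - 1)`: functions on the cube given by polynomials of degree less than `s`.
The strict bound makes `degreeLT m 0` the zero code, which starts inductions on the degree. -/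
def degreeLT (m s : ℕ) : Submodule (ZMod 2) (Cube m → ZMod 2) :=
  Submodule.span (ZMod 2) (monom '' {S | #S < s})

theorem monom_mem_degreeLT {S : Finset (Fin m)} (hS : #S < s) : monom S ∈ degreeLT m s :=
  Submodule.subset_span ⟨S, hS, rfl⟩

theorem degreeLT_zero : degreeLT m 0 = ⊥ := by simp [degreeLT]

theorem degreeLT_mono {s t : ℕ} (hst : s ≤ t) : degreeLT m s ≤ degreeLT m t :=
  Submodule.span_mono <| Set.image_mono fun _ hS => lt_of_lt_of_le hS hst

@[elab_as_elim]
theorem degreeLT_induction {p : (f : Cube m → ZMod 2) → f ∈ degreeLT m s → Prop}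
    (monom : ∀ (S : Finset (Fin m)) (hS : #S < s), p (monom S) (monom_mem_degreeLT hS))
    (zero : p 0 (zero_mem _)) (add : ∀ f g hf hg, p f hf → p g hg → p (f + g) (add_mem hf hg))
    (hf : f ∈ degreeLT m s) : p f hf := by
  refine Submodule.span_induction (fun _ ⟨S, hS, h⟩ => h ▸ monom S hS) zero add ?_ hf
  intro a f hf ih
  obtain rfl | rfl := eq_zero_or_eq_one a
  · simpa using zero
  · simpa using ih

theorem monom_mul_monom (S T : Finset (Fin m)) : monom S * monom T = monom (S ∪ T) := by
  classical
  have hidem : ∀ a : ZMod 2, a * a = a := by decide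
  funext x
  induction T using Finset.induction_on with
  | empty => simp [monom]
  | insert a T ha ih =>
    simp only [monom, Pi.mul_apply] at ih ⊢
    rw [prod_insert ha, mul_left_comm, ih]
    by_cases haS : a ∈ S ∪ T
    · rw [union_insert, insert_eq_of_mem haS, ← mul_prod_erase _ x haS, ← mul_assoc, hidem]
    · rw [union_insert, prod_insert haS]

theorem mul_mem_degreeLT {a b : ℕ} (hf : f ∈ degreeLT m (a + 1)) (hg : g ∈ degreeLT m b) :
    f * g ∈ degreeLT m (a + b) := by
  have hmul : f * g ∈ degreeLT m (a + 1) * degreeLT m b := Submodule.mul_mem_mul hf hg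
  rw [degreeLT, degreeLT, Submodule.span_mul_span] at hmul
  refine Submodule.span_le.2 ?_ hmul
  rintro _ ⟨_, ⟨S, hS, rfl⟩, _, ⟨T, hT, rfl⟩, rfl⟩
  change monom S * monom T ∈ _
  rw [monom_mul_monom]
  refine monom_mem_degreeLT ((card_union_le S T).trans_lt ?_)
  exact Nat.add_lt_add_of_le_of_lt (Nat.le_of_lt_succ hS) hT

theorem const_mem_degreeLT (m s : ℕ) (a : ZMod 2) : (fun _ => a) ∈ degreeLT m (s + 1) := by
  convert (degreeLT m (s + 1)).smul_mem a (monom_mem_degreeLT (S := ∅) s.succ_pos) with x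
  simp [monom]

theorem one_mem_degreeLT (m s : ℕ) : (1 : Cube m → ZMod 2) ∈ degreeLT m (s + 1) :=
  const_mem_degreeLT m s 1

theorem coord_mem_degreeLT (i : Fin m) : (fun x : Cube m => x i) ∈ degreeLT m 2 := by
  convert monom_mem_degreeLT (S := {i}) (by simp : #{i} < 2) with x
  simp [monom]

theorem prod_mem_degreeLT {ι : Type*} (S : Finset ι) {g : ι → Cube m → ZMod 2}
    (hg : ∀ i ∈ S, g i ∈ degreeLT m 2) : ∏ i ∈ S, g i ∈ degreeLT m (#S + 1) := by
  classical
  induction S using Finset.induction_on with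
  | empty => exact one_mem_degreeLT m 0
  | insert a S ha ih =>
    rw [forall_mem_insert] at hg
    rw [prod_insert ha, card_insert_of_notMem ha, add_comm #S, add_assoc]
    exact mul_mem_degreeLT hg.1 (ih hg.2)

theorem comp_mem_degreeLT {L : Cube n → Cube m} (hL : ∀ i, (fun x => L x i) ∈ degreeLT n 2)
    (hf : f ∈ degreeLT m s) : f ∘ L ∈ degreeLT n s := by
  induction hf using degreeLT_induction with
  | monom S hS =>
    convert degreeLT_mono hS (prod_mem_degreeLT S fun i _ => hL i) using 1
    funext x
    simp [monom]
  | zero => exact zero_mem _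
  | add f g _ _ hf hg => exact add_mem hf hg

theorem comp_add_right_mem_degreeLT (h : Cube m) (hf : f ∈ degreeLT m s) :
    (fun x => f (x + h)) ∈ degreeLT m s :=
  comp_mem_degreeLT (L := fun x => x + h)
    (fun i => add_mem (coord_mem_degreeLT i) (const_mem_degreeLT m 1 (h i))) hf

theorem fwdDiff_monom_mem_degreeLT (h : Cube m) (S : Finset (Fin m)) :
    Δ_[h] (monom S) ∈ degreeLT m #S := by
  classical
  induction S using Finset.induction_on with
  | empty =>
    have hconst : Δ_[h] (monom ∅) = 0 := funext fun x => by simp [fwdDiff, monom]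
    exact hconst ▸ zero_mem _
  | insert a S ha ih =>
    have hprod : Δ_[h] (monom (insert a S)) =
        Δ_[h] (monom S) * (fun x => (x + h) a) + h a • monom S := by
      funext x
      simp only [fwdDiff, monom, prod_insert ha, Pi.add_apply, Pi.mul_apply, Pi.smul_apply,
        smul_eq_mul]
      ring
    rw [hprod, card_insert_of_notMem ha]
    refine add_mem ?_ (Submodule.smul_mem _ _ (monom_mem_degreeLT (Nat.lt_succ_self _)))
    rw [mul_comm, add_comm #S]
    exact mul_mem_degreeLT (comp_add_right_mem_degreeLT h (coord_mem_degreeLT a)) ih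

theorem fwdDiff_mem_degreeLT (h : Cube m) (hf : f ∈ degreeLT m (s + 1)) :
    Δ_[h] f ∈ degreeLT m s := by
  induction hf using degreeLT_induction with
  | monom S hS => exact degreeLT_mono (Nat.lt_succ_iff.1 hS) (fwdDiff_monom_mem_degreeLT h S)
  | zero => simpa using fwdDiff_const h (0 : ZMod 2) ▸ zero_mem (degreeLT m s)
  | add f g _ _ hf hg => exact fwdDiff_add h f g ▸ add_mem hf hg

/-- The restriction of `f` to the hyperplane where the first coordinate equals `a`. -/
def slice (a : ZMod 2) (f : Cube (n + 1) → ZMod 2) : Cube n → ZMod 2 := fun x => f (Fin.cons a x)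

theorem slice_mem_degreeLT (a : ZMod 2) {f : Cube (n + 1) → ZMod 2}
    (hf : f ∈ degreeLT (n + 1) s) : slice a f ∈ degreeLT n s := by
  refine comp_mem_degreeLT (L := fun x => Fin.cons a x) (fun i => ?_) hf
  refine Fin.cases ?_ (fun i => coord_mem_degreeLT i) i
  exact const_mem_degreeLT n 1 a

theorem slice_one_sub_slice_zero_mem_degreeLT {f : Cube (n + 1) → ZMod 2}
    (hf : f ∈ degreeLT (n + 1) (s + 1)) : slice 1 f - slice 0 f ∈ degreeLT n s := by
  convert slice_mem_degreeLT 0 (fwdDiff_mem_degreeLT (Fin.cons 1 0) hf) using 1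
  funext x
  have hshift : (Fin.cons 0 x + Fin.cons 1 0 : Cube (n + 1)) = Fin.cons 1 x := by
    rw [← Matrix.vecCons, ← Matrix.vecCons, Matrix.cons_add_cons, zero_add, add_zero]; rfl
  simp [slice, fwdDiff, hshift]

theorem add_mul_mem_degreeLT (a : ZMod 2) {f g : Cube n → ZMod 2} (hf : f ∈ degreeLT n (s + 1))
    (hg : g ∈ degreeLT n s) :
    (fun x : Cube (n + 1) => f (Fin.tail x) + (x 0 - a) * g (Fin.tail x)) ∈
      degreeLT (n + 1) (s + 1) := by
  have htail : ∀ i : Fin n, (fun x : Cube (n + 1) => Fin.tail x i) ∈ degreeLT (n + 1) 2 :=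
    fun i => coord_mem_degreeLT i.succ
  refine add_mem (comp_mem_degreeLT htail hf) (add_comm s 1 ▸ mul_mem_degreeLT ?_
    (comp_mem_degreeLT htail hg))
  exact sub_mem (coord_mem_degreeLT 0) (const_mem_degreeLT _ 1 a)

theorem sum_cube_succ {M : Type*} [AddCommMonoid M] (F : Cube (n + 1) → M) :
    ∑ x, F x = ∑ x : Cube n, F (Fin.cons 0 x) + ∑ x : Cube n, F (Fin.cons 1 x) := by
  rw [← (Fin.consEquiv fun _ : Fin (n + 1) => ZMod 2).sum_comp, Fintype.sum_prod_type]
  exact Fin.sum_univ_two _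

theorem sum_eq_zero_of_mem_degreeLT (hf : f ∈ degreeLT m m) : ∑ x, f x = 0 := by
  induction m with
  | zero =>
    rw [degreeLT_zero, Submodule.mem_bot] at hf
    simp [hf]
  | succ m ih =>
    rw [← ih (slice_one_sub_slice_zero_mem_degreeLT hf), sum_cube_succ, ← sum_add_distrib]
    refine sum_congr rfl fun x _ => ?_
    rw [Pi.sub_apply, CharTwo.sub_eq_add, add_comm]
    rfl

theorem hammingNorm_eq_add_slice (f : Cube (n + 1) → ZMod 2) :
    hammingNorm f = hammingNorm (slice 0 f) + hammingNorm (slice 1 f) := by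
  simp only [hammingNorm, card_filter]
  exact sum_cube_succ _

theorem two_pow_le_hammingNorm_mul (hf : f ∈ degreeLT m (s + 1)) (hf0 : f ≠ 0) :
    2 ^ m ≤ hammingNorm f * 2 ^ s := by
  induction m generalizing s with
  | zero =>
    have := hammingNorm_pos_iff.2 hf0
    exact Nat.mul_pos this (by positivity)
  | succ m ih =>
    have hdiff := slice_one_sub_slice_zero_mem_degreeLT hf
    have hlower : ∀ g : Cube m → ZMod 2, g ∈ degreeLT m s → g ≠ 0 →
        2 ^ (m + 1) ≤ hammingNorm g * 2 ^ s := by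
      intro g hg hg0
      rcases s with _ | s
      · rw [degreeLT_zero, Submodule.mem_bot] at hg
        exact absurd hg hg0
      · rw [pow_succ, pow_succ, ← mul_assoc]
        exact Nat.mul_le_mul_right 2 (ih hg hg0)
    rw [hammingNorm_eq_add_slice]
    by_cases h0 : slice 0 f = 0
    · have h1 : slice 1 f ≠ 0 := fun h1 => hf0 <| hammingNorm_eq_zero.1 <| by
        rw [hammingNorm_eq_add_slice, h0, h1, hammingNorm_zero]
      simpa [h0] using hlower _ (by simpa [h0] using hdiff) h1
    by_cases h1 : slice 1 f = 0
    · simpa [h1] using hlower _ (by simpa [h1] using hdiff) h0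
    · linarith [ih (slice_mem_degreeLT 0 hf) h0, ih (slice_mem_degreeLT 1 hf) h1, pow_succ 2 m]

theorem evalLin_mem_degreeLT {r : ℕ} (c : RMcode m r) :
    (fun x => evalLin m r x c) ∈ degreeLT m (r + 1) := by
  have h : (fun x => evalLin m r x c) = ∑ S : MonIdx m r, c S • monom S.1 := by
    funext x
    simp [evalLin, monom, LinearMap.sum_apply, Finset.sum_apply, mul_comm]
  rw [h]
  exact sum_mem fun S _ => Submodule.smul_mem _ _ (monom_mem_degreeLT (Nat.lt_succ_of_le S.2))

end Polynomials

section BinomialSums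

/-- The number of monomials of degree less than `s` in `m` variables, `binom(m, ≤ s - 1)`. -/
def binomLT (m s : ℕ) : ℕ := ∑ i ∈ range s, m.choose i

@[simp] theorem binomLT_zero_right (m : ℕ) : binomLT m 0 = 0 := rfl

@[simp] theorem binomLT_zero_left (s : ℕ) : binomLT 0 (s + 1) = 1 := by
  simp [binomLT, sum_range_succ']

theorem binomLT_succ_succ (m s : ℕ) :
    binomLT (m + 1) (s + 1) = binomLT m (s + 1) + binomLT m s := by
  simp only [binomLT, sum_range_succ' _ s, Nat.choose_succ_succ', sum_add_distrib,
    Nat.choose_zero_right]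
  omega

theorem binomLT_succ_left_le (m s : ℕ) : binomLT (m + 1) s ≤ 2 * binomLT m s := by
  rcases s with _ | s
  · simp
  · rw [binomLT_succ_succ, two_mul]
    gcongr
    exact sum_le_sum_of_subset (range_mono s.le_succ)

theorem card_filter_card_lt (m s : ℕ) : #{S : Finset (Fin m) | #S < s} = binomLT m s := by
  rw [card_eq_sum_card_fiberwise (f := card) (t := range s) fun S hS => by simpa using hS, binomLT]
  refine sum_congr rfl fun i hi => ?_
  have hfiber : ({S : Finset (Fin m) | #S < s} : Finset _).filter (#· = i) =
      powersetCard i univ := by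
    ext S
    simp only [mem_filter, mem_univ, true_and, mem_powersetCard_univ]
    exact and_iff_right_of_imp fun h => h ▸ mem_range.1 hi
  rw [hfiber, card_powersetCard, card_univ, Fintype.card_fin]

end BinomialSums

section RankOfLargeSets

/-- The slopes of the concave function `rankBound s`. -/
noncomputable def rankSlope : ℕ → ℕ → ℝ
  | 0, _ => 0
  | _ + 1, 0 => 1
  | s + 1, j + 1 => binomLT (Nat.log 2 (j + 1)) s / 2 ^ Nat.log 2 (j + 1)

/-- The piecewise linear interpolation of `2 ^ n ↦ binomLT n s`, which bounds from below the rank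
of polynomials of degree less than `s` on a set of given cardinality. -/
noncomputable def rankBound (s a : ℕ) : ℝ := ∑ j ∈ range a, rankSlope s j

theorem rankSlope_nonneg (s j : ℕ) : 0 ≤ rankSlope s j := by
  rcases s with _ | s <;> rcases j with _ | j <;> simp only [rankSlope] <;> positivity

theorem rankSlope_antitone (s : ℕ) : Antitone (rankSlope s) := by
  rcases s with _ | s
  · exact fun _ _ _ => le_rfl
  have hquot : Antitone fun k => (binomLT k s : ℝ) / 2 ^ k := antitone_nat_of_succ_le fun k => by
    rw [pow_succ', div_le_div_iff₀ (by positivity) (by positivity), ← mul_assoc,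
      mul_comm _ (2 : ℝ)]
    gcongr
    exact_mod_cast binomLT_succ_left_le k s
  refine antitone_nat_of_succ_le fun j => ?_
  rcases j with _ | j
  · rcases s with _ | s <;> simp [rankSlope]
  · exact hquot (Nat.log_mono_right (Nat.le_succ _))

theorem rankSlope_two_mul_add (s j : ℕ) :
    rankSlope (s + 1) (2 * j) + rankSlope (s + 1) (2 * j + 1) =
      rankSlope (s + 1) j + rankSlope s j := by
  rcases j with _ | j
  · rcases s with _ | s <;> simp [rankSlope]
  have hlog (a : ℕ) (ha : a < 2) : Nat.log 2 (2 * (j + 1) + a) = Nat.log 2 (j + 1) + 1 := by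
    rw [Nat.log_of_one_lt_of_le one_lt_two (by omega)]
    congr 2
    omega
  have heven : rankSlope (s + 1) (2 * (j + 1)) =
      binomLT (Nat.log 2 (j + 1) + 1) s / 2 ^ (Nat.log 2 (j + 1) + 1) := by
    rw [← hlog 0 two_pos]; rfl
  have hodd : rankSlope (s + 1) (2 * (j + 1) + 1) =
      binomLT (Nat.log 2 (j + 1) + 1) s / 2 ^ (Nat.log 2 (j + 1) + 1) := by
    rw [← hlog 1 one_lt_two]; rfl
  rw [heven, hodd, ← two_mul, pow_succ', ← mul_div_assoc, mul_div_mul_left _ _ two_ne_zero]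
  rcases s with _ | s
  · simp [rankSlope]
  · rw [binomLT_succ_succ, Nat.cast_add, add_div]
    rfl

theorem rankBound_mono (s : ℕ) : Monotone (rankBound s) := fun _ _ hab =>
  sum_le_sum_of_subset_of_nonneg (range_mono hab) fun _ _ _ => rankSlope_nonneg _ _

theorem rankBound_two_mul (s b : ℕ) :
    rankBound (s + 1) (2 * b) = rankBound (s + 1) b + rankBound s b := by
  induction b with
  | zero => simp [rankBound]
  | succ b ih =>
    have h := rankSlope_two_mul_add s b
    simp only [rankBound, Nat.mul_succ, sum_range_succ] at ih ⊢
    linarith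

theorem rankBound_add_le {a b : ℕ} (s : ℕ) (hba : b ≤ a) :
    rankBound (s + 1) (a + b) ≤ rankBound (s + 1) a + rankBound s b := by
  have hshift : ∑ j ∈ range b, rankSlope (s + 1) (a + j) ≤
      ∑ j ∈ range b, rankSlope (s + 1) (b + j) :=
    sum_le_sum fun j _ => rankSlope_antitone _ (by omega)
  have hdouble := rankBound_two_mul s b
  rw [two_mul, rankBound, sum_range_add] at hdouble
  rw [rankBound, sum_range_add]
  simp only [rankBound] at hdouble ⊢
  linarith

theorem rankBound_two_pow (s n : ℕ) : rankBound s (2 ^ n) = binomLT n s := by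
  induction n generalizing s with
  | zero => rcases s with _ | s <;> simp [rankBound, rankSlope]
  | succ n ih =>
    rcases s with _ | s
    · simp [rankBound, rankSlope]
    · rw [pow_succ', rankBound_two_mul, ih, ih, binomLT_succ_succ, Nat.cast_add]

variable {m n s : ℕ}

/-- The subset of the cube `F₂^(n+1)` whose slice at `x 0 = a` is `T a`. -/
def glue (T : ZMod 2 → Finset (Cube n)) : Finset (Cube (n + 1)) := {x | Fin.tail x ∈ T (x 0)}

theorem glue_slices (A : Finset (Cube (n + 1))) : glue (fun a => {x | Fin.cons a x ∈ A}) = A := by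
  ext x
  simp [glue, Fin.cons_self_tail]

theorem glue_mono {T A : ZMod 2 → Finset (Cube n)} (h : T ≤ A) : glue T ⊆ glue A := fun _ hx =>
  mem_filter.2 ⟨mem_univ _, h _ (mem_filter.1 hx).2⟩

theorem card_glue (T : ZMod 2 → Finset (Cube n)) (a : ZMod 2) :
    #(glue T) = #(T a) + #(T (a + 1)) := by
  have hzero : #(glue T) = #(T 0) + #(T 1) := by
    rw [glue, card_filter, sum_cube_succ]
    simp
  rw [hzero]
  obtain rfl | rfl := eq_zero_or_eq_one a
  exacts [rfl, add_comm _ _]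

theorem eq_or_eq_add_one : ∀ a b : ZMod 2, b = a ∨ b = a + 1 := by decide

theorem Interpolates.glue {T : ZMod 2 → Finset (Cube n)} {a : ZMod 2}
    (hT : Interpolates (degreeLT n (s + 1)) (T a))
    (hT' : Interpolates (degreeLT n s) (T (a + 1))) :
    Interpolates (degreeLT (n + 1) (s + 1)) (glue T) := by
  intro φ
  obtain ⟨f, hf, hfT⟩ := hT fun x => φ (Fin.cons a x)
  obtain ⟨g, hg, hgT⟩ := hT' fun x => φ (Fin.cons (a + 1) x) - f x
  refine ⟨_, add_mul_mem_degreeLT a hf hg, fun x hx => ?_⟩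
  replace hx := (mem_filter.1 hx).2
  obtain h | h := eq_or_eq_add_one a (x 0) <;> rw [h] at hx ⊢
  · rw [hfT _ hx, sub_self, zero_mul, add_zero, ← h, Fin.cons_self_tail]
  · rw [hgT _ hx, add_sub_cancel_left, one_mul, add_sub_cancel, ← h, Fin.cons_self_tail]

theorem exists_interpolates_subset (s : ℕ) (A : Finset (Cube m)) :
    ∃ T ⊆ A, Interpolates (degreeLT m s) T ∧ rankBound s #A ≤ #T := by
  rcases s with _ | s
  · exact ⟨∅, empty_subset _, interpolates_empty, by simp [rankBound, rankSlope]⟩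
  induction m generalizing s with
  | zero =>
    refine ⟨A, Subset.rfl, fun φ => ⟨_, const_mem_degreeLT 0 s (φ 0), fun x _ => ?_⟩, ?_⟩
    · rw [Subsingleton.elim x 0]
    · have hA : #A ≤ 1 := card_le_one_of_subsingleton A
      interval_cases #A <;> simp [rankBound, rankSlope]
  | succ m ih =>
    rw [← glue_slices A]
    set A' : ZMod 2 → Finset (Cube m) := fun a => {x | Fin.cons a x ∈ A}
    obtain ⟨a, ha⟩ : ∃ a, #(A' (a + 1)) ≤ #(A' a) := by
      rcases le_total #(A' 1) #(A' 0) with h | h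
      exacts [⟨0, h⟩, ⟨1, h⟩]
    obtain ⟨T₁, hT₁A, hT₁, hcard₁⟩ := ih (A' a) s
    obtain ⟨T₂, hT₂A, hT₂, hcard₂⟩ : ∃ T ⊆ A' (a + 1), Interpolates (degreeLT m s) T ∧
        rankBound s #(A' (a + 1)) ≤ #T := by
      rcases s with _ | s
      · exact ⟨∅, empty_subset _, interpolates_empty, by simp [rankBound, rankSlope]⟩
      · exact ih _ s
    set T : ZMod 2 → Finset (Cube m) := fun b => if b = a then T₁ else T₂
    have hTa : T a = T₁ := if_pos rfl
    have hTa' : T (a + 1) = T₂ := if_neg (by simp)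
    refine ⟨glue T, glue_mono fun b => ?_, Interpolates.glue (hTa ▸ hT₁) (hTa' ▸ hT₂), ?_⟩
    · obtain rfl | rfl := eq_or_eq_add_one a b
      exacts [hTa ▸ hT₁A, hTa' ▸ hT₂A]
    · rw [card_glue A' a, card_glue T a, hTa, hTa', Nat.cast_add]
      exact (rankBound_add_le s ha).trans (add_le_add hcard₁ hcard₂)

theorem finrank_degreeLT (m s : ℕ) : finrank (ZMod 2) (degreeLT m s) = binomLT m s := by
  refine le_antisymm ?_ ?_
  · have hspan := finrank_span_finset_le_card (R := ZMod 2)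
      ((univ.filter fun S : Finset (Fin m) => #S < s).image monom)
    rw [coe_image, coe_filter_univ] at hspan
    exact hspan.trans (card_image_le.trans_eq (card_filter_card_lt m s))
  · obtain ⟨T, -, hT, hcard⟩ := exists_interpolates_subset s (univ : Finset (Cube m))
    rw [card_univ, Fintype.card_fun, ZMod.card, Fintype.card_fin, rankBound_two_pow] at hcard
    exact (Nat.cast_le.1 hcard).trans hT.card_le_finrank

open Classical in
/-- The closure of `T`: the points at which all codewords of `V` that vanish on `T` vanish. -/
noncomputable def zeroClosure {F α : Type*} [Field F] [Fintype α] (V : Submodule F (α → F))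
    (T : Finset α) : Finset α :=
  {x | ∀ f ∈ vanishingOn V T, f.1 x = 0}

theorem mem_zeroClosure {F α : Type*} [Field F] [Fintype α] {V : Submodule F (α → F)}
    {T : Finset α} {x : α} : x ∈ zeroClosure V T ↔ ∀ f ∈ vanishingOn V T, f.1 x = 0 := by
  simp [zeroClosure]

theorem card_zeroClosure_lt {T : Finset (Cube m)} (hT : #T < binomLT n s) :
    #(zeroClosure (degreeLT m s) T) < 2 ^ n := by
  by_contra! hcard
  obtain ⟨T', hT', hint, hrank⟩ := exists_interpolates_subset s (zeroClosure (degreeLT m s) T)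
  have hle : #T' ≤ #T := hint.card_le_card fun f hf => mem_vanishingOn.2 fun x hx =>
    mem_zeroClosure.1 (hT' hx) f hf
  have hbinom : (binomLT n s : ℝ) ≤ #T' :=
    (rankBound_two_pow s n).symm.trans_le ((rankBound_mono s hcard).trans hrank)
  exact absurd (hT.trans_le (Nat.cast_le.1 hbinom)) (not_lt.2 hle)

end RankOfLargeSets

section Bias

theorem natCard_eq_two_pow_finrank (V : Type*) [AddCommGroup V] [Module (ZMod 2) V]
    [Module.Finite (ZMod 2) V] : Nat.card V = 2 ^ finrank (ZMod 2) V := by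
  simpa using Module.natCard_eq_pow_finrank (K := ZMod 2) (V := V)

variable {α : Type*} [Fintype α]

/-- The character `a ↦ (-1)^a` of `F₂`. -/
noncomputable def sgn : AddChar (ZMod 2) ℝ := AddChar.zmodChar 2 (ζ := -1) (by norm_num)

@[simp] theorem sgn_one : sgn 1 = -1 := by
  rw [sgn, AddChar.zmodChar_apply, ZMod.val_one, pow_one]

theorem sgn_eq_ite (a : ZMod 2) : sgn a = if a = 0 then 1 else -1 := by
  obtain rfl | rfl := eq_zero_or_eq_one a <;> simp

theorem sgn_eq_one_iff {a : ZMod 2} : sgn a = 1 ↔ a = 0 := by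
  rw [sgn_eq_ite]
  split_ifs with h <;> norm_num [h]

theorem sgn_sum {ι : Type*} (s : Finset ι) (a : ι → ZMod 2) :
    sgn (∑ i ∈ s, a i) = ∏ i ∈ s, sgn (a i) :=
  map_prod sgn.toMonoidHom (fun i => Multiplicative.ofAdd (a i)) s

/-- The bias `𝔼 (-1)^(f x)` of a binary word. -/
noncomputable def bias (f : α → ZMod 2) : ℝ := (∑ x, sgn (f x)) / Fintype.card α

theorem bias_mul_card [Nonempty α] (f : α → ZMod 2) :
    bias f * Fintype.card α = ∑ x, sgn (f x) := div_mul_cancel₀ _ (by simp)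

theorem bias_eq_one_sub [Nonempty α] (f : α → ZMod 2) :
    bias f = 1 - 2 * hammingNorm f / Fintype.card α := by
  have hcard : (Fintype.card α : ℝ) ≠ 0 := by simp
  have hsgn : ∀ a : ZMod 2, sgn a = 1 - 2 * if a ≠ 0 then 1 else 0 := fun a => by
    rw [sgn_eq_ite]
    split_ifs <;> first | contradiction | norm_num
  rw [bias, div_eq_iff hcard, sub_mul, div_mul_cancel₀ _ hcard, hammingNorm, card_filter]
  simp only [hsgn, sum_sub_distrib, ← mul_sum, sum_const, card_univ, nsmul_eq_mul, mul_one,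
    one_mul, Nat.cast_sum, Nat.cast_ite, Nat.cast_one, Nat.cast_zero]

open Classical in
/-- The codewords of `V`, as a finite set over which one can sum. -/
noncomputable def codewords (V : Submodule (ZMod 2) (α → ZMod 2)) : Finset (α → ZMod 2) :=
  {f | f ∈ V}

variable {V : Submodule (ZMod 2) (α → ZMod 2)}

@[simp] theorem mem_codewords {f : α → ZMod 2} : f ∈ codewords V ↔ f ∈ V := by simp [codewords]

theorem card_codewords (V : Submodule (ZMod 2) (α → ZMod 2)) :
    #(codewords V) = 2 ^ finrank (ZMod 2) V := by
  rw [← natCard_eq_two_pow_finrank, Nat.subtype_card _ fun _ => mem_codewords]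

theorem sum_sgn_codewords {ι : Type*} [Fintype ι] (u : ι → α)
    [Decidable (1 ∈ dualCode (restrictTo V u))] :
    ∑ f ∈ codewords V, sgn (∑ i, f (u i)) =
      if 1 ∈ dualCode (restrictTo V u) then (#(codewords V) : ℝ) else 0 := by
  classical
  let φ : V →ₗ[ZMod 2] ZMod 2 := ∑ i, LinearMap.proj (u i) ∘ₗ V.subtype
  have hφ : ∀ f : V, φ f = ∑ i, f.1 (u i) := fun f => by simp [φ]
  have hsum := AddChar.sum_eq_ite (sgn.compAddMonoidHom φ.toAddMonoidHom)
  have htriv : sgn.compAddMonoidHom φ.toAddMonoidHom = 0 ↔ 1 ∈ dualCode (restrictTo V u) := by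
    simp only [AddChar.eq_zero_iff, AddChar.compAddMonoidHom_apply, LinearMap.toAddMonoidHom_coe,
      sgn_eq_one_iff, hφ, mem_dualCode, Pi.one_apply, mul_one]
    exact ⟨fun h _ ⟨f, hf, hfu⟩ => hfu ▸ h ⟨f, hf⟩, fun h f => h _ ⟨f.1, f.2, rfl⟩⟩
  have hcodewords : ∀ g : (α → ZMod 2) → ℝ, ∑ f ∈ codewords V, g f = ∑ f : V, g f := fun g =>
    sum_subtype _ (fun _ => mem_codewords) g
  have hcard : Fintype.card V = #(codewords V) := by
    rw [card_codewords, ← natCard_eq_two_pow_finrank, Nat.card_eq_fintype_card]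
  simp only [htriv, hcard] at hsum
  rw [hcodewords, ← hsum]
  exact sum_congr rfl fun f _ => by rw [← hφ]; rfl

open Classical in
theorem sum_bias_pow (V : Submodule (ZMod 2) (α → ZMod 2)) (w : ℕ) :
    ∑ f ∈ codewords V, bias f ^ w =
      #(codewords V) * #{u : Fin w → α | 1 ∈ dualCode (restrictTo V u)} / Fintype.card α ^ w := by
  have hpow : ∀ f : α → ZMod 2,
      bias f ^ w = (∑ u : Fin w → α, sgn (∑ i, f (u i))) / Fintype.card α ^ w := by
    intro f
    simp only [bias, div_pow, Fintype.sum_pow, sgn_sum]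
  simp only [hpow, ← sum_div]
  rw [sum_comm]
  simp only [sum_sgn_codewords, ← sum_filter, sum_const, nsmul_eq_mul, mul_comm]

end Bias

section TupleCounting

variable {F α ι : Type*} [Field F] [Fintype α] {V : Submodule F (α → F)}

theorem exists_card_le_forall_mem_zeroClosure [DecidableEq α] [Finite ι] (V : Submodule F (α → F))
    (u : ι → α) : ∃ I : Finset ι, #I ≤ finrank F (restrictTo V u) ∧
      ∀ i, u i ∈ zeroClosure V (I.image u) := by
  cases nonempty_fintype ι
  obtain ⟨I, -, hI, hle⟩ := exists_interpolates_subset_vanishingOn_le (restrictTo V u) univ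
  refine ⟨I, hI.card_le_finrank, fun i => mem_zeroClosure.2 fun f hf => ?_⟩
  have hmem : (⟨f.1 ∘ u, f, f.2, rfl⟩ : restrictTo V u) ∈ vanishingOn (restrictTo V u) I :=
    mem_vanishingOn.2 fun j hj => mem_vanishingOn.1 hf _ (mem_image_of_mem u hj)
  exact mem_vanishingOn.1 (hle hmem) i (mem_univ i)

theorem card_forall_mem_zeroClosure_le [Fintype ι] [DecidableEq α] [DecidableEq ι] {N : ℕ}
    (I : Finset ι) (hN : ∀ T : Finset α, #T ≤ #I → #(zeroClosure V T) ≤ N) :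
    #{u : ι → α | ∀ i, u i ∈ zeroClosure V (I.image u)} ≤
      Fintype.card α ^ #I * N ^ (Fintype.card ι - #I) := by
  have hinj : #{u : ι → α | ∀ i, u i ∈ zeroClosure V (I.image u)} ≤
      #((univ : Finset (I → α)).sigma fun p =>
        Fintype.piFinset fun _ : {i // i ∉ I} => zeroClosure V (univ.image p)) := by
    refine card_le_card_of_injOn (fun u => ⟨fun i => u i, fun i => u i⟩) (fun u hu => ?_)
      fun u _ v _ huv => funext fun i => ?_
    · have himage : univ.image (fun i : I => u i) = I.image u := by
        ext x
        simp
      rw [mem_coe, mem_sigma, Fintype.mem_piFinset, himage]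
      exact ⟨mem_univ _, fun i => (mem_filter.1 hu).2 i⟩
    · simp only [Sigma.mk.injEq, heq_eq_eq] at huv
      by_cases hi : i ∈ I
      exacts [congrFun huv.1 ⟨i, hi⟩, congrFun huv.2 ⟨i, hi⟩]
  refine hinj.trans ?_
  rw [card_sigma]
  refine (sum_le_card_nsmul _ _ (N ^ (Fintype.card ι - #I)) fun p _ => ?_).trans_eq ?_
  · rw [Fintype.card_piFinset, prod_const, card_univ, Fintype.card_subtype_compl,
      Fintype.card_coe]
    exact Nat.pow_le_pow_left (hN _ (card_image_le.trans_eq (Fintype.card_coe I))) _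
  · rw [card_univ, Fintype.card_fun, Fintype.card_coe, smul_eq_mul]

theorem card_finrank_restrictTo_lt_mul_le [Fintype ι] [DecidableEq ι] {N q R : ℕ}
    (hN : ∀ T : Finset α, #T < R → #(zeroClosure V T) ≤ N) (hq : 0 < q)
    (hNq : N * q ≤ Fintype.card α) :
    #{u : ι → α | finrank F (restrictTo V u) < R} * q ^ (Fintype.card ι - R) ≤
      2 ^ Fintype.card ι * Fintype.card α ^ Fintype.card ι := by
  classical
  have hcover : ({u : ι → α | finrank F (restrictTo V u) < R} : Finset _) ⊆
      ({I : Finset ι | #I < R} : Finset _).biUnion fun I =>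
        {u | ∀ i, u i ∈ zeroClosure V (I.image u)} := by
    intro u hu
    obtain ⟨I, hI, hcl⟩ := exists_card_le_forall_mem_zeroClosure V u
    exact mem_biUnion.2 ⟨I, by simpa using hI.trans_lt (mem_filter.1 hu).2, by simpa using hcl⟩
  have hI : ∀ I ∈ ({I : Finset ι | #I < R} : Finset _),
      #{u : ι → α | ∀ i, u i ∈ zeroClosure V (I.image u)} * q ^ (Fintype.card ι - R) ≤
        Fintype.card α ^ Fintype.card ι := by
    intro I hI
    replace hI := (mem_filter.1 hI).2
    calc
      _ ≤ Fintype.card α ^ #I * N ^ (Fintype.card ι - #I) * q ^ (Fintype.card ι - #I) :=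
        Nat.mul_le_mul (card_forall_mem_zeroClosure_le I fun T hT => hN T (hT.trans_lt hI))
          (Nat.pow_le_pow_right hq (by omega))
      _ ≤ Fintype.card α ^ #I * Fintype.card α ^ (Fintype.card ι - #I) := by
        rw [mul_assoc, ← mul_pow]
        gcongr
      _ = Fintype.card α ^ Fintype.card ι := by
        rw [← pow_add, Nat.add_sub_cancel' (card_le_univ I)]
  calc
    _ ≤ ∑ I with #I < R, #{u : ι → α | ∀ i, u i ∈ zeroClosure V (I.image u)} *
        q ^ (Fintype.card ι - R) := by
      rw [← sum_mul]
      exact Nat.mul_le_mul_right _ ((card_le_card hcover).trans card_biUnion_le)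
    _ ≤ _ := sum_le_card_nsmul _ _ _ hI
    _ ≤ _ := by
      rw [smul_eq_mul, ← Fintype.card_finset]
      exact Nat.mul_le_mul_right _ (card_le_univ _)

end TupleCounting

section MomentBound

variable {n t J s w : ℕ}

theorem natAdd_mul_comp_castAdd_mem_degreeLT (j : Fin J) {f : Cube n → ZMod 2}
    (hf : f ∈ degreeLT n s) :
    (fun x : Cube (n + J) => x (Fin.natAdd n j) * f (x ∘ Fin.castAdd J)) ∈
      degreeLT (n + J) (s + 1) := by
  rw [add_comm s]
  exact mul_mem_degreeLT (coord_mem_degreeLT _)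
    (comp_mem_degreeLT (L := fun x => x ∘ Fin.castAdd J) (fun i => coord_mem_degreeLT _) hf)

open Classical in
/-- Testing against the products `x_j h(x')`, where `x'` denotes the first `n` coordinates, shows
that the last `J` coordinates of a tuple counted on the left are dual words. -/
theorem card_one_mem_dualCode_le_sum (n J s w : ℕ) :
    #{x : Fin w → Cube (n + J) | 1 ∈ dualCode (restrictTo (degreeLT (n + J) (s + 1)) x)} ≤
      ∑ u : Fin w → Cube n, Nat.card (dualCode (restrictTo (degreeLT n s) u)) ^ J := by
  have hinj : #{x : Fin w → Cube (n + J) |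
      1 ∈ dualCode (restrictTo (degreeLT (n + J) (s + 1)) x)} ≤
      #((univ : Finset (Fin w → Cube n)).sigma fun u =>
        Fintype.piFinset fun _ : Fin J => codewords (dualCode (restrictTo (degreeLT n s) u))) := by
    refine card_le_card_of_injOn
      (fun x => ⟨fun i => x i ∘ Fin.castAdd J, fun j i => x i (Fin.natAdd n j)⟩)
      (fun x hx => ?_) fun x _ y _ hxy => ?_
    · rw [mem_coe, mem_sigma, Fintype.mem_piFinset]
      refine ⟨mem_univ _, fun j => mem_codewords.2 (mem_dualCode.2 ?_)⟩
      rintro _ ⟨f, hf, rfl⟩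
      have hx := mem_dualCode.1 (mem_filter.1 hx).2 _
        ⟨_, natAdd_mul_comp_castAdd_mem_degreeLT j hf, rfl⟩
      simpa [LinearMap.funLeft_apply, mul_comm] using hx
    · simp only [Sigma.mk.injEq, heq_eq_eq] at hxy
      refine funext fun i => funext fun k => Fin.addCases (fun k => ?_) (fun j => ?_) k
      exacts [congrFun (congrFun hxy.1 i) k, congrFun (congrFun hxy.2 j) i]
  refine hinj.trans_eq ?_
  simp only [card_sigma, Fintype.card_piFinset_const, card_codewords, natCard_eq_two_pow_finrank]

open Classical in
theorem card_finrank_degreeLT_lt_mul_le (n t s w : ℕ) :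
    #{u : Fin w → Cube (n + t) | finrank (ZMod 2) (restrictTo (degreeLT (n + t) s) u) <
        binomLT n s} * 2 ^ (t * (w - binomLT n s)) ≤ 2 ^ w * 2 ^ ((n + t) * w) := by
  have h := card_finrank_restrictTo_lt_mul_le (ι := Fin w) (N := 2 ^ n) (V := degreeLT (n + t) s)
    (fun T hT => (card_zeroClosure_lt hT).le) (pow_pos two_pos t) (by simp [pow_add])
  simpa [pow_mul] using h

theorem natCard_dualCode_pow_le (R : ℕ) (u : Fin w → Cube n)
    [Decidable (finrank (ZMod 2) (restrictTo (degreeLT n s) u) < R)] :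
    Nat.card (dualCode (restrictTo (degreeLT n s) u)) ^ J ≤ 2 ^ ((w - R) * J) +
      if finrank (ZMod 2) (restrictTo (degreeLT n s) u) < R then 2 ^ (w * J) else 0 := by
  have hrank := finrank_add_finrank_dualCode (restrictTo (degreeLT n s) u)
  rw [Fintype.card_fin] at hrank
  rw [natCard_eq_two_pow_finrank, ← pow_mul]
  split_ifs with h
  · exact le_add_left (Nat.pow_le_pow_right two_pos (Nat.mul_le_mul_right J (by omega)))
  · exact Nat.pow_le_pow_right two_pos (Nat.mul_le_mul_right J (by omega))

open Classical in
theorem card_one_mem_dualCode_le (J : ℕ) (hw : binomLT n s ≤ w) :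
    (#{x : Fin w → Cube (n + t + J) |
        1 ∈ dualCode (restrictTo (degreeLT (n + t + J) (s + 1)) x)} : ℝ) ≤
      2 ^ ((n + t + J) * w) *
        (1 / 2 ^ (binomLT n s * J) + 2 ^ w / 2 ^ (t * (w - binomLT n s))) := by
  set R := binomLT n s
  set L := #{u : Fin w → Cube (n + t) |
    finrank (ZMod 2) (restrictTo (degreeLT (n + t) s) u) < R} with hL
  have hlow : (L : ℝ) ≤ 2 ^ w * 2 ^ ((n + t) * w) / 2 ^ (t * (w - R)) := by
    rw [le_div_iff₀ (by positivity)]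
    exact_mod_cast card_finrank_degreeLT_lt_mul_le n t s w
  have hsum : #{x : Fin w → Cube (n + t + J) |
      1 ∈ dualCode (restrictTo (degreeLT (n + t + J) (s + 1)) x)} ≤
        2 ^ ((n + t) * w) * 2 ^ ((w - R) * J) + L * 2 ^ (w * J) := by
    refine (card_one_mem_dualCode_le_sum (n + t) J s w).trans
      ((sum_le_sum fun u _ => natCard_dualCode_pow_le R u).trans_eq ?_)
    simp [sum_add_distrib, ← sum_filter, hL, pow_mul]
  have hgap : (2 : ℝ) ^ ((w - R) * J) = 2 ^ (w * J) / 2 ^ (R * J) := by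
    rw [eq_div_iff (by positivity), ← pow_add, ← add_mul, Nat.sub_add_cancel hw]
  calc
    _ ≤ (2 : ℝ) ^ ((n + t) * w) * 2 ^ ((w - R) * J) + L * 2 ^ (w * J) := mod_cast hsum
    _ ≤ (2 : ℝ) ^ ((n + t) * w) * 2 ^ ((w - R) * J) +
        2 ^ w * 2 ^ ((n + t) * w) / 2 ^ (t * (w - R)) * 2 ^ (w * J) := by gcongr
    _ = _ := by
      rw [hgap, add_mul (n + t) J w, mul_comm J w, pow_add]
      ring

theorem card_filter_mul_pow_le_sum_bias_pow {α : Type*} [Fintype α]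
    (V : Submodule (ZMod 2) (α → ZMod 2)) {b : ℝ} (hb : 0 ≤ b) {w : ℕ} (hw : Even w) :
    #{f ∈ codewords V | b ≤ bias f} * b ^ w ≤ ∑ f ∈ codewords V, bias f ^ w := by
  rw [← nsmul_eq_mul]
  refine (card_nsmul_le_sum _ (fun f => bias f ^ w) _ fun f hf => ?_).trans
    (sum_le_sum_of_subset_of_nonneg (filter_subset _ _) fun f _ _ => hw.pow_nonneg _)
  exact pow_le_pow_left₀ hb (mem_filter.1 hf).2 w

open Classical in
theorem card_one_mem_dualCode_le_two_div (l B : ℕ) (hB : 1 ≤ B) :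
    (#{x : Fin (2 * (B * binomLT n s)) → Cube (n + (4 * l + 2) + 4 * l * B) |
        1 ∈ dualCode (restrictTo (degreeLT (n + (4 * l + 2) + 4 * l * B) (s + 1)) x)} : ℝ) ≤
      2 ^ ((n + (4 * l + 2) + 4 * l * B) * (2 * (B * binomLT n s))) *
        (2 / 2 ^ (4 * l * B * binomLT n s)) := by
  set R := binomLT n s
  have hRB : R ≤ B * R := Nat.le_mul_of_pos_left R hB
  refine (card_one_mem_dualCode_le (4 * l * B) (by omega)).trans ?_
  have hrare : (2 : ℝ) ^ (2 * (B * R)) / 2 ^ ((4 * l + 2) * (2 * (B * R) - R)) ≤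
      1 / 2 ^ (4 * l * B * R) := by
    rw [div_le_div_iff₀ (by positivity) (by positivity), one_mul, ← pow_add]
    refine pow_le_pow_right₀ one_le_two ?_
    calc 2 * (B * R) + 4 * l * B * R = (4 * l + 2) * (B * R) := by ring
      _ ≤ _ := Nat.mul_le_mul_left _ (by omega)
  gcongr
  calc _ ≤ (1 : ℝ) / 2 ^ (4 * l * B * R) + 1 / 2 ^ (4 * l * B * R) := by
        rw [mul_comm R]; gcongr
    _ = _ := by ring

theorem card_bias_ge_mul_le (n s l : ℕ) {B : ℕ} (hB : 1 ≤ B) :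
    (#{f ∈ codewords (degreeLT (n + (4 * l + 2) + 4 * l * B) (s + 1)) | (1 / 2) ^ l ≤ bias f} : ℝ) *
      2 ^ (2 * l * B * binomLT n s) ≤ 2 * 2 ^ binomLT (n + (4 * l + 2) + 4 * l * B) (s + 1) := by
  classical
  set R := binomLT n s
  set m := n + (4 * l + 2) + 4 * l * B
  have hmoment := card_filter_mul_pow_le_sum_bias_pow (degreeLT m (s + 1))
    (b := (1 / 2) ^ l) (by positivity) (even_two_mul (B * R))
  have hcard : (Fintype.card (Cube m) : ℝ) ^ (2 * (B * R)) = 2 ^ (m * (2 * (B * R))) := by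
    simp [pow_mul]
  rw [sum_bias_pow, mul_div_assoc, card_codewords, finrank_degreeLT, hcard] at hmoment
  have htuples := card_one_mem_dualCode_le_two_div (n := n) (s := s) l B hB
  rw [← div_le_iff₀' (by positivity)] at htuples
  have hpow : ((1 / 2 : ℝ) ^ l) ^ (2 * (B * R)) = 1 / 2 ^ (2 * l * B * R) := by
    rw [← pow_mul, one_div_pow]
    ring_nf
  have hsq : (2 : ℝ) ^ (4 * l * B * R) = 2 ^ (2 * l * B * R) * 2 ^ (2 * l * B * R) := by
    rw [← pow_add]; ring_nf
  have h := hmoment.trans (mul_le_mul_of_nonneg_left htuples (by positivity))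
  rw [hpow, hsq, mul_one_div, div_le_iff₀ (by positivity)] at h
  calc _ ≤ _ := mul_le_mul_of_nonneg_right h (by positivity)
    _ = _ := by field_simp; norm_cast

end MomentBound

section Derivatives

open scoped fwdDiff

theorem sum_sq_sum_mul_card {α : Type*} [Fintype α] (g : α → ℝ) (hg : ∑ a, g a = 0) (k : ℕ) :
    (∑ y : Fin k → α, (∑ i, g (y i)) ^ 2) * Fintype.card α =
      k * (Fintype.card α : ℝ) ^ k * ∑ a, g a ^ 2 := by
  induction k with
  | zero => simp
  | succ k ih =>
    have hexpand : ∀ y : Fin k → α, ∑ a, (g a + ∑ i, g (y i)) ^ 2 =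
        ∑ a, g a ^ 2 + Fintype.card α * (∑ i, g (y i)) ^ 2 := by
      intro y
      simp only [add_sq, sum_add_distrib, ← sum_mul, ← mul_sum, hg, sum_const, card_univ,
        nsmul_eq_mul]
      ring
    rw [← (Fin.consEquiv fun _ : Fin (k + 1) => α).sum_comp, Fintype.sum_prod_type_right]
    simp only [Fin.consEquiv_apply, Fin.sum_univ_succ, Fin.cons_zero, Fin.cons_succ, hexpand,
      sum_add_distrib, sum_const, card_univ, Fintype.card_fun, Fintype.card_fin, nsmul_eq_mul,
      ← mul_sum]
    rw [add_mul, mul_assoc _ (∑ y : Fin k → α, _), ih]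
    push_cast
    ring

variable {α : Type*} [Fintype α] {V W : Submodule (ZMod 2) (α → ZMod 2)} {f g : α → ZMod 2}
  {k c : ℕ}

/-- The codewords of `V` of relative weight at most `2⁻ᵏ`. -/
noncomputable def lowWeight (V : Submodule (ZMod 2) (α → ZMod 2)) (k : ℕ) :
    Finset (α → ZMod 2) :=
  {f ∈ codewords V | hammingNorm f * 2 ^ k ≤ Fintype.card α}

theorem mem_lowWeight : f ∈ lowWeight V k ↔ f ∈ V ∧ hammingNorm f * 2 ^ k ≤ Fintype.card α := by
  simp [lowWeight]

theorem zero_mem_lowWeight (V : Submodule (ZMod 2) (α → ZMod 2)) (k : ℕ) : 0 ∈ lowWeight V k :=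
  mem_lowWeight.2 ⟨V.zero_mem, by simp⟩

theorem hammingNorm_sub (f g : α → ZMod 2) : hammingNorm (f - g) = hammingDist f g := by
  simp only [hammingNorm, hammingDist, Pi.sub_apply, sub_ne_zero]

theorem sum_sgn_sub_bias [Nonempty α] (f : α → ZMod 2) : ∑ x, (sgn (f x) - bias f) = 0 := by
  rw [sum_sub_distrib, ← bias_mul_card, sum_const, card_univ, nsmul_eq_mul, mul_comm, sub_self]

theorem sum_sgn_sub_bias_sq [Nonempty α] (f : α → ZMod 2) :
    ∑ x, (sgn (f x) - bias f) ^ 2 = Fintype.card α * (1 - bias f ^ 2) := by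
  have hsq : ∀ a : ZMod 2, sgn a ^ 2 = 1 := fun a => by
    rw [← AddChar.map_nsmul_eq_pow, two_nsmul, CharTwo.add_self_eq_zero, AddChar.map_zero_eq_one]
  simp only [sub_sq, hsq, sum_add_distrib, sum_sub_distrib, ← sum_mul, ← mul_sum,
    ← bias_mul_card, sum_const, card_univ, nsmul_eq_mul]
  ring

variable [AddCommGroup α]

/-- The points `x` at which the values `f (x + y i)` do not have a strict majority of zeros. -/
noncomputable def badPoints (f : α → ZMod 2) (y : Fin k → α) : Finset α :=
  {x | ∑ i, sgn (f (x + y i)) ≤ 0}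

theorem card_badPoints_mul_sq_le (hf : 0 ≤ bias f) (y : Fin k → α) :
    #(badPoints f y) * (k * bias f) ^ 2 ≤ ∑ x, (∑ i, (sgn (f (x + y i)) - bias f)) ^ 2 := by
  rw [← nsmul_eq_mul]
  refine (card_nsmul_le_sum _ (fun x => (∑ i, (sgn (f (x + y i)) - bias f)) ^ 2) _
    fun x hx => ?_).trans (sum_le_univ_sum_of_nonneg fun _ => sq_nonneg _)
  have hx := (mem_filter.1 hx).2
  rw [sum_sub_distrib, sum_const, card_univ, Fintype.card_fin, nsmul_eq_mul, ← neg_sq (_ - _)]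
  exact pow_le_pow_left₀ (by positivity) (by linarith) 2

theorem sum_sum_sq_sgn_sub_bias (f : α → ZMod 2) (k : ℕ) :
    ∑ y : Fin k → α, ∑ x, (∑ i, (sgn (f (x + y i)) - bias f)) ^ 2 =
      k * (Fintype.card α : ℝ) ^ k * (Fintype.card α * (1 - bias f ^ 2)) := by
  rw [sum_comm, ← sum_sgn_sub_bias_sq, ← sum_sq_sum_mul_card _ (sum_sgn_sub_bias f), mul_comm,
    ← nsmul_eq_mul, ← card_univ, ← sum_const]
  exact sum_congr rfl fun x _ => Equiv.sum_comp (Equiv.addLeft fun _ : Fin k => x)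
    fun y : Fin k → α => (∑ i, (sgn (f (y i)) - bias f)) ^ 2

theorem exists_card_badPoints_mul_le (hk : 0 < k) (hf : 0 ≤ bias f) :
    ∃ y : Fin k → α, #(badPoints f y) * (k * bias f ^ 2) ≤
      Fintype.card α * (1 - bias f ^ 2) := by
  obtain ⟨y, -, hy⟩ : ∃ y ∈ (univ : Finset (Fin k → α)), #(badPoints f y) * (k * bias f) ^ 2 ≤
      k * (Fintype.card α * (1 - bias f ^ 2)) := by
    refine exists_le_of_sum_le univ_nonempty
      ((sum_le_sum fun y _ => card_badPoints_mul_sq_le hf y).trans_eq ?_)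
    rw [sum_sum_sq_sgn_sub_bias, sum_const, card_univ, Fintype.card_fun, Fintype.card_fin,
      nsmul_eq_mul, Nat.cast_pow]
    ring
  refine ⟨y, le_of_mul_le_mul_left ?_ (Nat.cast_pos.2 hk : (0 : ℝ) < k)⟩
  linarith

theorem eq_of_fwdDiff_eq {y : Fin k → α} (h : ∀ i, Δ_[y i] f = Δ_[y i] g) {x : α}
    (hf : x ∉ badPoints f y) (hg : x ∉ badPoints g y) : f x = g x := by
  simp only [badPoints, mem_filter, mem_univ, true_and, not_le] at hf hg
  have hmajority : ∀ f : α → ZMod 2,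
      sgn (f x) * ∑ i, sgn (f (x + y i)) = ∑ i, sgn (Δ_[y i] f x) := fun f => by
    simp only [fwdDiff, CharTwo.sub_eq_add, AddChar.map_add_eq_mul, mul_sum, mul_comm]
  have hsum : sgn (f x) * ∑ i, sgn (f (x + y i)) = sgn (g x) * ∑ i, sgn (g (x + y i)) := by
    simp only [hmajority, h]
  obtain hfx | hfx := eq_zero_or_eq_one (f x) <;> obtain hgx | hgx := eq_zero_or_eq_one (g x) <;>
    rw [hfx, hgx] at hsum ⊢ <;> simp only [AddChar.map_zero_eq_one, sgn_one] at hsum <;> linarith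

theorem hammingDist_le_of_fwdDiff_eq {y : Fin k → α} (h : ∀ i, Δ_[y i] f = Δ_[y i] g) :
    hammingDist f g ≤ #(badPoints f y) + #(badPoints g y) := by
  classical
  refine (card_le_card fun x hx => ?_).trans (card_union_le _ _)
  by_contra hbad
  rw [mem_union, not_or] at hbad
  exact (mem_filter.1 hx).2 (eq_of_fwdDiff_eq h hbad.1 hbad.2)

theorem card_le_of_fwdDiff_mem {S U : Finset (α → ZMod 2)} (hS : S ⊆ codewords V)
    (hU : ∀ f ∈ S, ∀ y, Δ_[y] f ∈ U)
    (hbad : ∀ f ∈ S, ∃ y : Fin c → α, #(badPoints f y) * 2 ^ (k + 1) ≤ Fintype.card α) :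
    #S ≤ #(lowWeight V k) * (Fintype.card α * #U) ^ c := by
  classical
  choose! y hy using hbad
  have hcard : #((univ : Finset (Fin c → α)) ×ˢ Fintype.piFinset fun _ : Fin c => U) =
      (Fintype.card α * #U) ^ c := by
    rw [card_product, Fintype.card_piFinset_const, card_univ, Fintype.card_fun,
      Fintype.card_fin, mul_pow]
  rw [← hcard]
  refine card_le_mul_card_image_of_maps_to
    (f := fun f => (y f, fun i => Δ_[y f i] f)) (fun f hf => ?_) _ fun p _ => ?_
  · exact mem_product.2 ⟨mem_univ _, Fintype.mem_piFinset.2 fun i => hU f hf _⟩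
  obtain hempty | ⟨g, hg⟩ :=
      (S.filter fun f => (y f, fun i => Δ_[y f i] f) = p).eq_empty_or_nonempty
  · simp [hempty]
  obtain ⟨hgS, rfl⟩ := mem_filter.1 hg
  refine card_le_card_of_injOn (· - g) (fun f hf => ?_) sub_left_injective.injOn
  obtain ⟨hfS, hfg⟩ := mem_filter.1 hf
  obtain ⟨hyfg, hdiff⟩ := Prod.mk.inj hfg
  refine mem_lowWeight.2 ⟨sub_mem (mem_codewords.1 (hS hfS)) (mem_codewords.1 (hS hgS)), ?_⟩
  have hdist : hammingDist f g ≤ #(badPoints f (y f)) + #(badPoints g (y g)) := by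
    rw [hyfg] at hdiff ⊢
    exact hammingDist_le_of_fwdDiff_eq fun i => congrFun hdiff i
  have hf := hy f hfS
  have hg := hy g hgS
  beta_reduce
  rw [hammingNorm_sub]
  rw [pow_succ] at hf hg
  linarith [Nat.mul_le_mul_right (2 ^ k) hdist]

theorem hammingNorm_fwdDiff_le (f : α → ZMod 2) (y : α) :
    hammingNorm (Δ_[y] f) ≤ 2 * hammingNorm f := by
  have hshift : hammingNorm (fun x => f (x + y)) = hammingNorm f := by
    simp only [hammingNorm, card_filter]
    exact Equiv.sum_comp (Equiv.addRight y) fun x => if f x ≠ 0 then 1 else 0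
  calc hammingNorm (Δ_[y] f) = hammingDist (fun x => f (x + y)) f := hammingNorm_sub _ f
    _ ≤ hammingDist (fun x => f (x + y)) 0 + hammingDist 0 f := hammingDist_triangle _ _ _
    _ = 2 * hammingNorm f := by
      rw [hammingDist_zero_right, hammingDist_zero_left, hshift, two_mul]

theorem card_lowWeight_succ_le (hVW : ∀ f ∈ V, ∀ y, Δ_[y] f ∈ W) (hk : 2 ≤ k) :
    #(lowWeight V (k + 1)) ≤
      #(lowWeight V (k + 2)) * (Fintype.card α * #(lowWeight W k)) ^ 32 := by
  refine card_le_of_fwdDiff_mem (filter_subset _ _) (fun f hf y => ?_) fun f hf => ?_ <;>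
    obtain ⟨hfV, hwt⟩ := mem_lowWeight.1 hf
  · refine mem_lowWeight.2 ⟨hVW f hfV y, ?_⟩
    calc _ ≤ 2 * hammingNorm f * 2 ^ k := Nat.mul_le_mul_right _ (hammingNorm_fwdDiff_le f y)
      _ = hammingNorm f * 2 ^ (k + 1) := by ring
      _ ≤ _ := hwt
  have hbias := bias_eq_one_sub f
  set a : ℝ := 2 * hammingNorm f / Fintype.card α with ha
  have hcard : (0 : ℝ) < Fintype.card α := Nat.cast_pos.2 Fintype.card_pos
  have ha0 : 0 ≤ a := by positivity
  have hak : a * 2 ^ k ≤ 1 := by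
    rw [ha, div_mul_eq_mul_div, div_le_one hcard, mul_right_comm, ← pow_succ', mul_comm]
    exact_mod_cast hwt
  have h4k : (2 : ℝ) ^ 2 ≤ 2 ^ k := pow_le_pow_right₀ one_le_two hk
  have ha4 : a ≤ 1 / 4 := by nlinarith
  obtain ⟨y, hy⟩ := exists_card_badPoints_mul_le (k := 32) (f := f) (by norm_num) (by linarith)
  rw [hbias] at hy
  have hbad : (#(badPoints f y) : ℝ) * 16 ≤ Fintype.card α * (2 * a) :=
    calc _ ≤ (#(badPoints f y) : ℝ) * ((32 : ℕ) * (1 - a) ^ 2) := by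
          gcongr; push_cast; nlinarith
      _ ≤ _ := hy
      _ ≤ _ := by gcongr; nlinarith
  refine ⟨y, ?_⟩
  have : (#(badPoints f y) : ℝ) * 2 ^ (k + 2 + 1) ≤ Fintype.card α := by
    have := mul_le_mul_of_nonneg_right hbad (by positivity : (0 : ℝ) ≤ 2 ^ k)
    rw [pow_succ, pow_add]
    nlinarith
  exact_mod_cast this

theorem card_bias_ge_le_card_lowWeight_mul (hVW : ∀ f ∈ V, ∀ y, Δ_[y] f ∈ W) {b : ℝ} (hb : 0 ≤ b)
    (hc : 2 ^ (k + 1) ≤ c * b ^ 2) :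
    #{f ∈ codewords V | b ≤ bias f} ≤
      #(lowWeight V k) * (Fintype.card α * #(codewords W)) ^ c := by
  have hc0 : 0 < c := Nat.pos_of_ne_zero fun h => by
    rw [h, Nat.cast_zero, zero_mul] at hc
    exact absurd hc (not_le.2 (by positivity))
  refine card_le_of_fwdDiff_mem (filter_subset _ _) (fun f hf y => ?_) fun f hf => ?_ <;>
    obtain ⟨hfV, hbf⟩ := mem_filter.1 hf
  · exact mem_codewords.2 (hVW f (mem_codewords.1 hfV) y)
  obtain ⟨y, hy⟩ := exists_card_badPoints_mul_le hc0 (hb.trans hbf)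
  refine ⟨y, ?_⟩
  have : (#(badPoints f y) : ℝ) * 2 ^ (k + 1) ≤ Fintype.card α :=
    calc _ ≤ (#(badPoints f y) : ℝ) * (c * bias f ^ 2) := by
          gcongr; exact hc.trans (by gcongr)
      _ ≤ _ := hy
      _ ≤ _ := mul_le_of_le_one_right (Nat.cast_nonneg _) (by linarith [sq_nonneg (bias f)])
  exact_mod_cast this

end Derivatives

section LargeBias

open Real

variable {m r s k : ℕ}

theorem logb_le_of_le_mul_pow {a b c n : ℕ} (ha : 0 < a) (h : a ≤ b * c ^ n) :
    logb 2 a ≤ logb 2 b + n * logb 2 c := by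
  have hbc : (b : ℝ) * c ^ n ≠ 0 := by exact_mod_cast (ha.trans_le h).ne'
  rw [← logb_pow, ← logb_mul (left_ne_zero_of_mul hbc) (right_ne_zero_of_mul hbc)]
  exact logb_le_logb_of_le one_lt_two (Nat.cast_pos.2 ha) (by exact_mod_cast h)

theorem logb_card_cube_mul {a : ℕ} (ha : 0 < a) :
    logb 2 (Fintype.card (Cube m) * a : ℕ) = m + logb 2 a := by
  rw [Nat.cast_mul, logb_mul (by simp) (Nat.cast_pos.2 ha).ne']
  simp [logb_pow]

theorem logb_card_codewords_degreeLT (m s : ℕ) :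
    logb 2 #(codewords (degreeLT m s)) = binomLT m s := by
  simp [card_codewords, finrank_degreeLT, logb_pow]

theorem lowWeight_degreeLT_eq_singleton (h : s < k) : lowWeight (degreeLT m (s + 1)) k = {0} := by
  refine eq_singleton_iff_unique_mem.2 ⟨zero_mem_lowWeight _ _, fun f hf => ?_⟩
  obtain ⟨hfV, hwt⟩ := mem_lowWeight.1 hf
  by_contra hf0
  have hlt := Nat.mul_lt_mul_of_pos_left (Nat.pow_lt_pow_right one_lt_two h)
    (hammingNorm_pos_iff.2 hf0)
  have hcard : Fintype.card (Cube m) = 2 ^ m := by simp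
  exact absurd ((two_pow_le_hammingNorm_mul hfV hf0).trans_lt hlt) (not_lt.2 (hcard ▸ hwt))

theorem logb_card_lowWeight_le (m s k : ℕ) :
    logb 2 #(lowWeight (degreeLT m s) k) ≤ binomLT m s := by
  rw [← logb_card_codewords_degreeLT]
  exact logb_le_logb_of_le one_lt_two
    (Nat.cast_pos.2 (card_pos.2 ⟨0, zero_mem_lowWeight _ _⟩))
    (Nat.cast_le.2 (card_le_card (filter_subset _ _)))

theorem logb_card_lowWeight_succ_le (m s : ℕ) (hk : 2 ≤ k) :
    logb 2 #(lowWeight (degreeLT m (s + 1)) (k + 1)) ≤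
      logb 2 #(lowWeight (degreeLT m (s + 1)) (k + 2)) +
        32 * (m + logb 2 #(lowWeight (degreeLT m s) k)) := by
  have hpos : ∀ s k, 0 < #(lowWeight (degreeLT m s) k) := fun s k =>
    card_pos.2 ⟨0, zero_mem_lowWeight _ _⟩
  rw [← logb_card_cube_mul (hpos s k)]
  exact_mod_cast logb_le_of_le_mul_pow (hpos _ _)
    (card_lowWeight_succ_le (fun f hf y => fwdDiff_mem_degreeLT y hf) hk)

theorem mul_pow_le_binomLT {Q t : ℕ} (hQ : ∀ s ≤ t + 1, Q * binomLT m s ≤ binomLT m (s + 1)) :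
    m * Q ^ t ≤ binomLT m (t + 2) := by
  induction t with
  | zero => simp [binomLT, sum_range_succ]
  | succ t ih =>
    calc m * Q ^ (t + 1) = Q * (m * Q ^ t) := by ring
      _ ≤ Q * binomLT m (t + 2) := Nat.mul_le_mul_left _ (ih fun s hs => hQ s (by omega))
      _ ≤ _ := hQ _ le_rfl

theorem four_pow_mul_logb_card_lowWeight_le
    (hQ : ∀ t ≤ s, 2 ^ 16 * binomLT m t ≤ binomLT m (t + 1)) (hk : 4 ≤ k) :
    4 ^ k * logb 2 #(lowWeight (degreeLT m (s + 1)) k) ≤ binomLT m (s + 1) := by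
  induction s generalizing k with
  | zero => simp [lowWeight_degreeLT_eq_singleton (show 0 < k by omega)]
  | succ s ih =>
    induction hd : s + 2 - k generalizing k with
    | zero => simp [lowWeight_degreeLT_eq_singleton (show s + 1 < k by omega)]
    | succ d ihd =>
      obtain ⟨j, rfl⟩ : ∃ j, k = j + 1 := ⟨k - 1, by omega⟩
      have hnext := ihd (k := j + 2) (by omega) (by omega)
      have hrec := logb_card_lowWeight_succ_le m (s + 1) (k := j) (by omega)
      have hgrowth : (2 : ℝ) ^ 16 * binomLT m (s + 1) ≤ binomLT m (s + 1 + 1) :=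
        mod_cast hQ _ le_rfl
      have hlower : 4 ^ j * logb 2 #(lowWeight (degreeLT m (s + 1)) j) ≤
          64 * binomLT m (s + 1) := by
        obtain rfl | hj : j = 3 ∨ 4 ≤ j := by omega
        · linarith [logb_card_lowWeight_le m (s + 1) 3]
        · linarith [ih (fun t ht => hQ t (by omega)) hj, (binomLT m (s + 1)).cast_nonneg (α := ℝ)]
      have hlinear : 2 ^ 9 * 4 ^ j * (m : ℝ) ≤ binomLT m (s + 1 + 1) := by
        have hexp : 2 ^ 9 * 4 ^ j ≤ (2 ^ 16) ^ s := by
          rw [show 4 = 2 ^ 2 by norm_num, ← pow_mul, ← pow_mul, ← pow_add]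
          exact Nat.pow_le_pow_right two_pos (by omega)
        have := (Nat.mul_le_mul_left m hexp).trans (mul_pow_le_binomLT hQ)
        rw [mul_comm]
        exact_mod_cast this
      have h4 := mul_le_mul_of_nonneg_left hrec (by positivity : (0 : ℝ) ≤ 4 ^ (j + 1))
      rw [pow_succ] at hnext h4 ⊢
      rw [pow_succ] at hnext
      linarith

theorem bias_nonpos_of_mem_degreeLT_two {f : Cube m → ZMod 2} (hf : f ∈ degreeLT m 2)
    (hf0 : f ≠ 0) : bias f ≤ 0 := by
  have hwt : Fintype.card (Cube m) ≤ hammingNorm f * 2 := by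
    simpa using two_pow_le_hammingNorm_mul (s := 1) hf hf0
  rw [bias_eq_one_sub, sub_nonpos, one_le_div (Nat.cast_pos.2 Fintype.card_pos), mul_comm]
  exact_mod_cast hwt

theorem logb_card_bias_ge_le (m r : ℕ) :
    logb 2 #{f ∈ codewords (degreeLT m (r + 1)) | (1 / 2) ^ 9 ≤ bias f} ≤
      logb 2 #(lowWeight (degreeLT m (r + 1)) 4) + 2 ^ 23 * (m + binomLT m r) := by
  have hlarge := card_bias_ge_le_card_lowWeight_mul (k := 4) (c := 2 ^ 23) (b := (1 / 2) ^ 9)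
    (fun f (hf : f ∈ degreeLT m (r + 1)) y => fwdDiff_mem_degreeLT y hf) (by norm_num)
    (by norm_num)
  have hbias : (1 / 2) ^ 9 ≤ bias (0 : Cube m → ZMod 2) := by
    rw [bias_eq_one_sub]; norm_num
  have hlog := logb_le_of_le_mul_pow
    (card_pos.2 ⟨0, mem_filter.2 ⟨mem_codewords.2 (zero_mem _), hbias⟩⟩) hlarge
  rw [logb_card_cube_mul (card_pos.2 ⟨0, mem_codewords.2 (zero_mem _)⟩),
    logb_card_codewords_degreeLT] at hlog
  exact_mod_cast hlog

theorem thirty_two_mul_logb_card_bias_ge_le (hr : 1 ≤ r)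
    (hQ : ∀ t ≤ r, 2 ^ 30 * binomLT m t ≤ binomLT m (t + 1)) :
    32 * logb 2 #{f ∈ codewords (degreeLT m (r + 1)) | (1 / 2) ^ 9 ≤ bias f} ≤
      binomLT m (r + 1) := by
  obtain rfl | hr2 : r = 1 ∨ 2 ≤ r := by omega
  · have hsub : {f ∈ codewords (degreeLT m 2) | (1 / 2) ^ 9 ≤ bias f} ⊆ {0} := fun f hf => by
      obtain ⟨hfV, hbias⟩ := mem_filter.1 hf
      by_contra hf0
      have := bias_nonpos_of_mem_degreeLT_two (mem_codewords.1 hfV) (by simpa using hf0)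
      linarith [show (0 : ℝ) < (1 / 2) ^ 9 by norm_num]
    have hcard : (#{f ∈ codewords (degreeLT m 2) | (1 / 2) ^ 9 ≤ bias f} : ℝ) ≤ 1 :=
      mod_cast card_le_card hsub
    rw [mul_comm]
    exact (mul_nonpos_of_nonpos_of_nonneg (logb_nonpos one_lt_two (Nat.cast_nonneg _) hcard)
      (by norm_num)).trans (Nat.cast_nonneg _)
  obtain ⟨t, rfl⟩ : ∃ t, r = t + 2 := ⟨r - 2, by omega⟩
  have hlow := four_pow_mul_logb_card_lowWeight_le (m := m) (s := t + 2) (k := 4)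
    (fun t ht => (Nat.mul_le_mul_right _ (by norm_num)).trans (hQ t ht)) le_rfl
  have hm : (m : ℝ) ≤ binomLT m (t + 2) := by
    refine Nat.cast_le.2 (le_trans ?_ (mul_pow_le_binomLT (Q := 2 ^ 30) fun s hs =>
      hQ s (by omega)))
    exact Nat.le_mul_of_pos_right _ (by positivity)
  have hgrowth : (2 : ℝ) ^ 30 * binomLT m (t + 2) ≤ binomLT m (t + 2 + 1) := mod_cast hQ _ le_rfl
  linarith [logb_card_bias_ge_le m (t + 2)]

end LargeBias

section BinomialGrowth

open Real

variable {m n r l : ℕ}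

theorem binomLT_succ (m s : ℕ) : binomLT m (s + 1) = binomLT m s + m.choose s :=
  sum_range_succ _ _

theorem one_le_binomLT_succ (m s : ℕ) : 1 ≤ binomLT m (s + 1) := by
  simp [binomLT, sum_range_succ']

theorem mul_binomLT_succ_le (hrm : r ≤ m) : r * binomLT m (r + 1) ≤ 2 * m * binomLT m r := by
  obtain _ | r := r
  · simp
  have hchoose : (r + 1) * m.choose (r + 1) ≤ m * m.choose r := by
    rw [mul_comm, Nat.choose_succ_right_eq, mul_comm]
    exact Nat.mul_le_mul_right _ (Nat.sub_le _ _)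
  have hle : m.choose r ≤ binomLT m (r + 1) := by
    rw [binomLT_succ]
    exact Nat.le_add_left _ _
  rw [binomLT_succ]
  nlinarith

theorem mul_binomLT_le_succ {Q : ℕ} (h : (Q + 1) * r ≤ m) :
    ∀ t ≤ r, Q * binomLT m t ≤ binomLT m (t + 1) := by
  intro t ht
  rw [binomLT, binomLT, sum_range_succ', mul_sum]
  refine (sum_le_sum fun i hi => ?_).trans (Nat.le_add_right _ _)
  have hir : (Q + 1) * (i + 1) ≤ (Q + 1) * r :=
    Nat.mul_le_mul_left _ ((Nat.succ_le_of_lt (mem_range.1 hi)).trans ht)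
  have hQ : Q * (i + 1) ≤ m - i := by rw [add_mul] at hir; omega
  refine Nat.le_of_mul_le_mul_right ?_ i.succ_pos
  calc Q * m.choose i * (i + 1) = m.choose i * (Q * (i + 1)) := by ring
    _ ≤ m.choose i * (m - i) := Nat.mul_le_mul_left _ hQ
    _ = _ := (Nat.choose_succ_right_eq m i).symm

theorem binomLT_succ_left_le_exp_mul (hr : 8 * r ≤ m) (hm : m ≤ 2 * n) :
    (binomLT (n + 1) r : ℝ) ≤ exp (4 * r / m) * binomLT n r := by
  rw [binomLT, binomLT, Nat.cast_sum, Nat.cast_sum, mul_sum]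
  refine sum_le_sum fun i hi => ?_
  have hir : i < r := mem_range.1 hi
  have hm0 : (0 : ℝ) < m := Nat.cast_pos.2 (by omega)
  have hchoose : (n.choose i : ℝ) * (n + 1) = (n + 1).choose i * (n + 1 - i) := by
    rw [← Nat.cast_succ, ← Nat.cast_sub (by omega)]
    exact_mod_cast Nat.choose_mul_succ_eq n i
  have hir : (i : ℝ) ≤ r := mod_cast hir.le
  have hr : (8 : ℝ) * r ≤ m := mod_cast hr
  have hm : (m : ℝ) ≤ 2 * n := mod_cast hm
  have hpos : (0 : ℝ) < n + 1 - i := by linarith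
  have hratio : (n + 1 : ℝ) ≤ exp (4 * r / m) * (n + 1 - i) := by
    have hi : (i : ℝ) ≤ 4 * r / m * (n + 1 - i) := by
      rw [div_mul_eq_mul_div, le_div_iff₀ hm0]
      nlinarith [(Nat.cast_nonneg r : (0 : ℝ) ≤ r)]
    nlinarith [add_one_le_exp (4 * (r : ℝ) / m)]
  refine le_of_mul_le_mul_right ?_ hpos
  rw [← hchoose, mul_right_comm, mul_comm]
  gcongr

theorem binomLT_add_left_le_exp_mul (hr : 8 * r ≤ m) (hm : m ≤ 2 * n) (j : ℕ) :
    (binomLT (n + j) r : ℝ) ≤ exp (4 * r / m * j) * binomLT n r := by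
  induction j with
  | zero => simp
  | succ j ih =>
    calc _ ≤ exp (4 * r / m) * binomLT (n + j) r :=
          binomLT_succ_left_le_exp_mul hr (by omega)
      _ ≤ exp (4 * r / m) * (exp (4 * r / m * j) * binomLT n r) := by gcongr
      _ = _ := by
        rw [← mul_assoc, ← exp_add]
        push_cast
        ring_nf

theorem pow_mul_binomLT_le {x : ℝ} (hx0 : 0 ≤ x) (hx1 : x ≤ 1) (hrm : r ≤ m) :
    x ^ r * binomLT m (r + 1) ≤ (x + 1) ^ m := by
  rw [add_pow, binomLT, Nat.cast_sum, mul_sum]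
  refine (sum_le_sum fun i hi => ?_).trans (sum_le_sum_of_subset_of_nonneg
    (range_mono (Nat.add_le_add_right hrm 1)) fun _ _ _ => by positivity)
  rw [one_pow, mul_one]
  gcongr ?_ * _
  exact pow_le_pow_of_le_one hx0 hx1 (Nat.lt_succ_iff.1 (mem_range.1 hi))

theorem log_binomLT_le (hrm : r ≤ m) : log (binomLT m (r + 1)) ≤ r * (8 * log 2) + m / 256 := by
  have hpos : (0 : ℝ) < binomLT m (r + 1) := Nat.cast_pos.2 (one_le_binomLT_succ m r)
  have h := log_le_log (by positivity)
    (pow_mul_binomLT_le (x := (2 ^ 8)⁻¹) (by norm_num) (by norm_num) hrm)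
  rw [log_mul (by positivity) hpos.ne', log_pow, log_pow, log_inv, log_pow] at h
  have hone : log ((2 ^ 8)⁻¹ + 1) ≤ 1 / 256 :=
    (log_le_sub_one_of_pos (by norm_num)).trans (by norm_num)
  have hm := mul_le_mul_of_nonneg_left hone (Nat.cast_nonneg (α := ℝ) m)
  push_cast at h
  linarith

theorem forty_mul_le_of_two_pow_le_sq (hm : 2 ^ 31 * r ≤ m) (hl : 2 ^ l ≤ binomLT m (r + 1) ^ 2) :
    40 * l ≤ m := by
  have hN := log_binomLT_le (m := m) (r := r) (by omega)
  have hlog : l * log 2 ≤ 2 * log (binomLT m (r + 1)) := by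
    rw [← log_pow, ← Nat.cast_two (R := ℝ), ← log_pow]
    exact log_le_log (by positivity) (mod_cast hl)
  have hm : (2 : ℝ) ^ 31 * r ≤ m := mod_cast hm
  have hr : (r : ℝ) * (8 * log 2) ≤ r * 8 := by gcongr; linarith [log_two_lt_d9]
  have hl : (l : ℝ) * (1 / 2) ≤ l * log 2 := by gcongr; linarith [log_two_gt_d9]
  have : (40 : ℝ) * l ≤ m := by linarith
  exact_mod_cast this

end BinomialGrowth

section SmallBias

open Real

variable {m r l K : ℕ}

theorem exists_block_decomposition (hr : 1 ≤ r) (hl : 1 ≤ l) (hlm : 40 * l ≤ m) :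
    ∃ n B, 1 ≤ B ∧ m = n + (4 * l + 2) + 4 * l * B ∧ m ≤ 2 * n ∧
      m ≤ 16 * r * (l * B) ∧ 16 * r * (l * B) ≤ m + 16 * r * l := by
  set B := m / (16 * r * l) + 1 with hB
  have hlower : m ≤ 16 * r * (l * B) := by
    rw [← mul_assoc]
    exact (Nat.lt_mul_div_succ m (by positivity)).le
  have hupper : 16 * r * (l * B) ≤ m + 16 * r * l := by
    rw [← mul_assoc, hB, mul_add_one]
    exact Nat.add_le_add_right (Nat.mul_div_le m _) _
  have hblock : 16 * (l * B) ≤ m + 16 * l := by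
    refine Nat.le_of_mul_le_mul_right ?_ hr
    nlinarith
  have hassoc : 4 * l * B = 4 * (l * B) := mul_assoc _ _ _
  exact ⟨m - (4 * l + 2) - 4 * l * B, B, Nat.le_add_left _ _, by omega, by omega, hlower, hupper⟩

theorem card_bias_ge_mul_exp_le (hr : 1 ≤ r) (hm : 2 ^ 31 * r ≤ m) (hl : 10 ≤ l)
    (hlm : 40 * l ≤ m) :
    #{f ∈ codewords (degreeLT m (r + 1)) | (1 / 2) ^ l ≤ bias f} *
      exp (binomLT m (r + 1) * exp (-(l / 8)) / 24) ≤ 2 * 2 ^ binomLT m (r + 1) := by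
  obtain ⟨n, B, hB, hmn, hm2, hlower, hupper⟩ := exists_block_decomposition hr (by omega) hlm
  have hcount := card_bias_ge_mul_le n r l hB
  have hgrow := binomLT_add_left_le_exp_mul (r := r) (by omega) hm2 (4 * l + 2 + 4 * l * B)
  rw [← add_assoc, ← hmn] at hgrow
  rw [← hmn] at hcount
  refine le_trans (mul_le_mul_of_nonneg_left ?_ (Nat.cast_nonneg _)) hcount
  have hm0 : (0 : ℝ) < m := Nat.cast_pos.2 (by omega)
  have hr0 : (0 : ℝ) < r := Nat.cast_pos.2 hr
  have hlR : (10 : ℝ) ≤ l := mod_cast hl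
  have hlower : (m : ℝ) ≤ 16 * r * (l * B) := mod_cast hlower
  have hexponent : 4 * (r : ℝ) / m * (4 * l + 2 + 4 * l * B : ℕ) ≤ l / 8 := by
    have hupper : (16 : ℝ) * r * (l * B) ≤ m + 16 * r * l := mod_cast hupper
    have hm : (2 : ℝ) ^ 31 * r ≤ m := mod_cast hm
    rw [div_mul_eq_mul_div, div_le_iff₀ hm0]
    push_cast
    nlinarith
  have hR : exp (-(l / 8)) * binomLT m r ≤ binomLT n r := by
    rw [exp_neg, inv_mul_le_iff₀ (exp_pos _)]
    exact hgrow.trans (by gcongr)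
  have hN : (r : ℝ) * binomLT m (r + 1) ≤ 2 * m * binomLT m r :=
    mod_cast mul_binomLT_succ_le (by omega)
  have hNR : binomLT m (r + 1) * exp (-(l / 8)) ≤ 32 * (l * B * binomLT n r) := by
    refine le_of_mul_le_mul_left ?_ hr0
    calc r * (binomLT m (r + 1) * exp (-(l / 8)))
      _ = r * binomLT m (r + 1) * exp (-(l / 8)) := by ring
      _ ≤ 2 * m * binomLT m r * exp (-(l / 8)) := by gcongr
      _ = 2 * m * (exp (-(l / 8)) * binomLT m r) := by ring
      _ ≤ 2 * (16 * r * (l * B)) * binomLT n r := by gcongr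
      _ = r * (32 * (l * B * binomLT n r)) := by ring
  rw [← exp_log (show (0 : ℝ) < 2 ^ (2 * l * B * binomLT n r) by positivity), exp_le_exp, log_pow]
  have hlog : (2 / 3 : ℝ) ≤ log 2 := by linarith [log_two_gt_d9]
  have := mul_le_mul_of_nonneg_left hlog (show 0 ≤ l * B * (binomLT n r : ℝ) by positivity)
  push_cast
  linarith

theorem one_add_bias_nonneg {α : Type*} [Fintype α] [Nonempty α] (f : α → ZMod 2) :
    0 ≤ 1 + bias f := by
  have hcard : (0 : ℝ) < Fintype.card α := Nat.cast_pos.2 Fintype.card_pos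
  have hwt : (hammingNorm f : ℝ) ≤ Fintype.card α := mod_cast hammingNorm_le_card_fintype
  have := (div_le_one hcard).2 hwt
  rw [bias_eq_one_sub, mul_div_assoc]
  linarith

theorem one_add_bias_pow_le_exp {α : Type*} [Fintype α] [Nonempty α] {f : α → ZMod 2} {b : ℝ}
    (hb : bias f ≤ b) (K : ℕ) : (1 + bias f) ^ K ≤ exp (K * b) := by
  rw [exp_nat_mul]
  exact pow_le_pow_left₀ (one_add_bias_nonneg f) (by linarith [add_one_le_exp b]) K

theorem sqrt_le_mul_exp_of_two_pow_le_sq {N : ℕ} (h : 2 ^ l ≤ N ^ 2) :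
    √N ≤ N * exp (-(l / 8)) := by
  have hN : 0 < N := Nat.pos_of_ne_zero fun h0 => by simp [h0] at h
  have hN0 : (0 : ℝ) < N := Nat.cast_pos.2 hN
  have hlog : l * log 2 ≤ 2 * log N := by
    rw [← log_pow, ← Nat.cast_two (R := ℝ), ← log_pow]
    exact log_le_log (by positivity) (mod_cast h)
  have hl : (l : ℝ) * (1 / 2) ≤ l * log 2 := by gcongr; linarith [log_two_gt_d9]
  have hexp : exp (-(log N / 2)) ≤ exp (-(l / 8)) := exp_le_exp.2 (by linarith)
  have hsqrt : √N = N * exp (-(log N / 2)) := by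
    nth_rw 2 [← exp_log hN0]
    rw [← exp_add, ← sub_eq_add_neg, sub_half, exp_half, exp_log hN0]
  rw [hsqrt]
  gcongr

theorem two_mul_half_pow_le_exp (hl : 10 ≤ l) : 2 * (1 / 2 : ℝ) ^ l ≤ exp (-(l / 8)) / 48 := by
  have hbase : (1 / 2 : ℝ) ≤ exp (-(1 / 8)) * (4 / 7) := by
    linarith [add_one_le_exp (-(1 / 8) : ℝ)]
  have hexp : exp (-(1 / 8)) ^ l = exp (-(l / 8)) := by
    rw [← exp_nat_mul]
    ring_nf
  calc 2 * (1 / 2 : ℝ) ^ l ≤ 2 * (exp (-(1 / 8)) * (4 / 7)) ^ l := by gcongr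
    _ = exp (-(l / 8)) * (2 * (4 / 7) ^ l) := by rw [mul_pow, hexp]; ring
    _ ≤ exp (-(l / 8)) * (2 * (4 / 7) ^ 10) := by
      gcongr ?_ * (2 * ?_)
      exact pow_le_pow_of_le_one (by norm_num) (by norm_num) hl
    _ ≤ exp (-(l / 8)) * (1 / 48) := by gcongr; norm_num
    _ = _ := by ring

theorem sum_bias_level_le (hr : 1 ≤ r) (hm : 2 ^ 31 * r ≤ m) (hl : 10 ≤ l)
    (hlN : 2 ^ l ≤ binomLT m (r + 1) ^ 2) (hK : K ≤ binomLT m (r + 1)) :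
    ∑ f ∈ codewords (degreeLT m (r + 1)) with (1 / 2) ^ l ≤ bias f ∧ bias f ≤ 2 * (1 / 2) ^ l,
      (1 + bias f) ^ K ≤
        2 * 2 ^ binomLT m (r + 1) * exp (-(√(binomLT m (r + 1)) / 48)) := by
  have hcount := card_bias_ge_mul_exp_le hr hm hl (forty_mul_le_of_two_pow_le_sq hm hlN)
  have hsqrt := sqrt_le_mul_exp_of_two_pow_le_sq hlN
  set N := binomLT m (r + 1)
  set E := exp (-(l / 8))
  have hsub : #{f ∈ codewords (degreeLT m (r + 1)) |
      (1 / 2) ^ l ≤ bias f ∧ bias f ≤ 2 * (1 / 2) ^ l} ≤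
        #{f ∈ codewords (degreeLT m (r + 1)) | (1 / 2) ^ l ≤ bias f} :=
    card_le_card (monotone_filter_right _ fun _ _ h => h.1)
  have hK : (K : ℝ) * (2 * (1 / 2) ^ l) ≤ N * (E / 48) := by
    gcongr
    exact two_mul_half_pow_le_exp hl
  calc _ ≤ #{f ∈ codewords (degreeLT m (r + 1)) |
        (1 / 2) ^ l ≤ bias f ∧ bias f ≤ 2 * (1 / 2) ^ l} • exp (K * (2 * (1 / 2) ^ l)) :=
        sum_le_card_nsmul _ _ _ fun f hf => one_add_bias_pow_le_exp (mem_filter.1 hf).2.2 K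
    _ ≤ #{f ∈ codewords (degreeLT m (r + 1)) | (1 / 2) ^ l ≤ bias f} *
        exp (N * E / 24 + -(√N / 48)) := by
        rw [nsmul_eq_mul]
        gcongr
        linarith
    _ ≤ _ := by
        rw [exp_add, ← mul_assoc]
        gcongr

end SmallBias

section Moment

open Real Filter Topology

variable {m r K : ℕ} {ε : ℝ}

theorem sum_le_card_mul_of_cover {ι κ : Type*} {s : Finset ι} {I : Finset κ} {p : κ → ι → Prop}
    [∀ k, DecidablePred (p k)] {w : ι → ℝ} {c : ℝ} (hw : ∀ i ∈ s, 0 ≤ w i)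
    (hcover : ∀ i ∈ s, ∃ k ∈ I, p k i) (hp : ∀ k ∈ I, ∑ i ∈ s with p k i, w i ≤ c) :
    ∑ i ∈ s, w i ≤ #I * c :=
  calc ∑ i ∈ s, w i ≤ ∑ i ∈ s, ∑ k ∈ I with p k i, w i := sum_le_sum fun i hi => by
        obtain ⟨k, hk, hki⟩ := hcover i hi
        exact single_le_sum (f := fun _ => w i) (fun _ _ => hw i hi) (mem_filter.2 ⟨hk, hki⟩)
    _ = ∑ k ∈ I, ∑ i ∈ s with p k i, w i := sum_comm' fun i k => by simp only [mem_filter]; tauto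
    _ ≤ #I * c := by
        rw [← nsmul_eq_mul]
        exact sum_le_card_nsmul _ _ _ hp

theorem one_add_bias_le_two_rpow {α : Type*} [Fintype α] [Nonempty α] {f : α → ZMod 2} {j : ℕ}
    (hf : Fintype.card α ≤ hammingNorm f * 2 ^ j) : 1 + bias f ≤ 2 ^ (1 - (1 / 2) ^ j : ℝ) := by
  set δ : ℝ := (1 / 2) ^ j with hδ
  have hwt : δ ≤ hammingNorm f / Fintype.card α := by
    rw [hδ, one_div_pow, div_le_div_iff₀ (by positivity) (Nat.cast_pos.2 Fintype.card_pos), one_mul]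
    exact_mod_cast hf
  have hexp : 1 - δ ≤ 2 ^ (-δ) := by
    rw [rpow_def_of_pos two_pos]
    refine (one_sub_le_exp_neg δ).trans (exp_le_exp.2 ?_)
    nlinarith [log_two_lt_d9, show 0 ≤ δ by positivity]
  rw [sub_eq_add_neg, rpow_add two_pos, rpow_one, bias_eq_one_sub, mul_div_assoc]
  linarith

theorem sum_one_add_bias_pow_le_two_rpow {α : Type*} [Fintype α] [Nonempty α]
    {T U : Finset (α → ZMod 2)} {j N : ℕ} (hTU : T ⊆ U)
    (hT : ∀ f ∈ T, Fintype.card α ≤ hammingNorm f * 2 ^ j)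
    (hU : 2 ^ (j + 1) * logb 2 #U ≤ N) (hε : ε ≤ 1 / 2) (hK : K ≤ (1 - ε) * N) :
    ∑ f ∈ T, (1 + bias f) ^ K ≤ 2 ^ ((1 - ε) * N) := by
  obtain rfl | hne := T.eq_empty_or_nonempty
  · rw [sum_empty]
    positivity
  set δ : ℝ := (1 / 2) ^ j with hδ
  have hδ1 : δ ≤ 1 := pow_le_one₀ (by norm_num) (by norm_num)
  have hcard : (#T : ℝ) ≤ 2 ^ (N * (δ / 2)) := by
    have hlog : logb 2 #U ≤ N * (δ / 2) := by
      rw [hδ, one_div_pow, div_div, ← pow_succ, mul_one_div, le_div_iff₀ (by positivity), mul_comm]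
      exact hU
    refine (Nat.cast_le.2 (card_le_card hTU)).trans ((logb_le_iff_le_rpow one_lt_two ?_).1 hlog)
    exact Nat.cast_pos.2 (hne.mono hTU).card_pos
  have hterm : ∀ f ∈ T, (1 + bias f) ^ K ≤ 2 ^ ((1 - δ) * ((1 - ε) * N)) := fun f hf =>
    calc (1 + bias f) ^ K ≤ (2 ^ (1 - δ) : ℝ) ^ K :=
          pow_le_pow_left₀ (one_add_bias_nonneg f) (one_add_bias_le_two_rpow (hT f hf)) K
      _ = 2 ^ ((1 - δ) * K) := by rw [rpow_mul two_pos.le, rpow_natCast]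
      _ ≤ _ := by
          gcongr
          linarith
  calc _ ≤ #T * (2 : ℝ) ^ ((1 - δ) * ((1 - ε) * N)) := by
        rw [← nsmul_eq_mul]
        exact sum_le_card_nsmul _ _ _ hterm
    _ ≤ 2 ^ (N * (δ / 2)) * (2 : ℝ) ^ ((1 - δ) * ((1 - ε) * N)) := by gcongr
    _ = 2 ^ (N * (δ / 2) + (1 - δ) * ((1 - ε) * N)) := (rpow_add two_pos _ _).symm
    _ ≤ _ := by
        gcongr
        · exact one_le_two
        · nlinarith [show 0 ≤ N * δ by positivity]

theorem exists_mem_lowWeight_le_hammingNorm {f : Cube m → ZMod 2} (hf : f ∈ degreeLT m (r + 1))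
    (hf0 : f ≠ 0) :
    ∃ k ∈ range (r + 1), Fintype.card (Cube m) ≤ hammingNorm f * 2 ^ (k + 4) ∧
      (k ≠ 0 → f ∈ lowWeight (degreeLT m (r + 1)) (k + 3)) := by
  have hr : Fintype.card (Cube m) ≤ hammingNorm f * 2 ^ (r + 4) := by
    have hcard : Fintype.card (Cube m) = 2 ^ m := by simp
    rw [hcard]
    exact (two_pow_le_hammingNorm_mul hf hf0).trans
      (Nat.mul_le_mul_left _ (Nat.pow_le_pow_right two_pos (Nat.le_add_right r 4)))
  classical
  have hex : ∃ k, Fintype.card (Cube m) ≤ hammingNorm f * 2 ^ (k + 4) := ⟨r, hr⟩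
  refine ⟨Nat.find hex, mem_range.2 (Nat.lt_succ_of_le (Nat.find_min' hex hr)),
    Nat.find_spec hex, fun hk => mem_lowWeight.2 ⟨hf, ?_⟩⟩
  obtain ⟨k, hk⟩ := Nat.exists_eq_succ_of_ne_zero hk
  have hlt := Nat.find_min hex (m := k) (by omega)
  rw [hk]
  exact (not_le.1 hlt).le

theorem sum_large_bias_le (hr : 1 ≤ r) (hm : 2 ^ 31 * r ≤ m) (hε : ε ≤ 1 / 2)
    (hK : K ≤ (1 - ε) * binomLT m (r + 1)) :
    ∑ f ∈ codewords (degreeLT m (r + 1)) with (1 / 2) ^ 9 ≤ bias f, (1 + bias f) ^ K ≤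
      (r + 2) * 2 ^ ((1 - ε) * binomLT m (r + 1)) := by
  classical
  have hgrowth := mul_binomLT_le_succ (Q := 2 ^ 30) (r := r) (m := m) (by omega)
  have hbias0 : bias (0 : Cube m → ZMod 2) = 1 := by simp [bias_eq_one_sub]
  set S := {f ∈ codewords (degreeLT m (r + 1)) | (1 / 2) ^ 9 ≤ bias f} with hS
  have hS0 : (0 : Cube m → ZMod 2) ∈ S :=
    mem_filter.2 ⟨mem_codewords.2 (zero_mem _), by rw [hbias0]; norm_num⟩
  have hzero : (1 + bias (0 : Cube m → ZMod 2)) ^ K ≤ 2 ^ ((1 - ε) * binomLT m (r + 1)) := by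
    rw [hbias0, one_add_one_eq_two, ← rpow_natCast]
    exact rpow_le_rpow_of_exponent_le one_le_two hK
  have hnonzero := sum_le_card_mul_of_cover (s := S.erase 0) (w := fun f => (1 + bias f) ^ K)
    (c := 2 ^ ((1 - ε) * binomLT m (r + 1)))
    (fun f _ => pow_nonneg (one_add_bias_nonneg f) K)
    (fun f hf => exists_mem_lowWeight_le_hammingNorm
      (mem_codewords.1 (mem_filter.1 (mem_of_mem_erase hf)).1) (ne_of_mem_erase hf))
    fun k _ => by
      obtain rfl | hk := eq_or_ne k 0
      · refine sum_one_add_bias_pow_le_two_rpow (j := 4) (U := S)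
          ((filter_subset _ _).trans (erase_subset _ _))
          (fun f hf => (mem_filter.1 hf).2.1) ?_ hε hK
        exact (thirty_two_mul_logb_card_bias_ge_le hr hgrowth).trans' (by norm_num [hS])
      · refine sum_one_add_bias_pow_le_two_rpow (U := lowWeight (degreeLT m (r + 1)) (k + 3))
          (fun f hf => (mem_filter.1 hf).2.2 hk) (fun f hf => (mem_filter.1 hf).2.1) ?_ hε hK
        refine le_trans ?_ (four_pow_mul_logb_card_lowWeight_le
          (fun t ht => (Nat.mul_le_mul_right _ (by norm_num)).trans (hgrowth t ht))
          (by omega : 4 ≤ k + 3))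
        have hlog : 0 ≤ logb 2 #(lowWeight (degreeLT m (r + 1)) (k + 3)) :=
          div_nonneg (log_natCast_nonneg _) (log_pos one_lt_two).le
        gcongr
        rw [show (4 : ℝ) = 2 ^ 2 by norm_num, ← pow_mul]
        exact pow_le_pow_right₀ one_le_two (by omega)
  rw [← add_sum_erase S _ hS0]
  rw [card_range] at hnonzero
  push_cast at hnonzero
  linarith

theorem sum_medium_bias_le (hr : 1 ≤ r) (hm : 2 ^ 31 * r ≤ m) (hK : K ≤ binomLT m (r + 1)) :
    ∑ f ∈ codewords (degreeLT m (r + 1)) with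
        (1 / 2) ^ Nat.log 2 (binomLT m (r + 1) ^ 2) < bias f ∧ bias f < (1 / 2) ^ 9,
      (1 + bias f) ^ K ≤
        binomLT m (r + 1) ^ 2 *
          (2 * 2 ^ binomLT m (r + 1) * exp (-(√(binomLT m (r + 1)) / 48))) := by
  have hN := one_le_binomLT_succ m r
  set N := binomLT m (r + 1)
  set L := Nat.log 2 (N ^ 2)
  have hL : 2 ^ L ≤ N ^ 2 := Nat.pow_log_le_self 2 (by positivity)
  refine (sum_le_card_mul_of_cover (I := Icc 10 L)
    (p := fun l f => (1 / 2) ^ l ≤ bias f ∧ bias f ≤ 2 * (1 / 2) ^ l)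
    (c := 2 * 2 ^ N * exp (-(√N / 48)))
    (fun f _ => pow_nonneg (one_add_bias_nonneg f) K) (fun f hf => ?_) fun l hl => ?_).trans ?_
  · obtain ⟨-, hlower, hupper⟩ := mem_filter.1 hf
    obtain ⟨l, hl, hl'⟩ := exists_nat_pow_near_of_lt_one ((by positivity : (0 : ℝ) <
      (1 / 2) ^ L).trans hlower) (hupper.le.trans (by norm_num)) one_half_pos one_half_lt_one
    have h9 := (pow_lt_pow_iff_right_of_lt_one₀ one_half_pos one_half_lt_one).1 (hl.trans hupper)
    have hL := (pow_lt_pow_iff_right_of_lt_one₀ one_half_pos one_half_lt_one).1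
      (hlower.trans_le hl')
    exact ⟨l + 1, mem_Icc.2 ⟨by omega, by omega⟩, hl.le, by rw [pow_succ]; linarith⟩
  · refine le_trans ?_ (sum_bias_level_le hr hm (mem_Icc.1 hl).1
      ((Nat.pow_le_pow_right two_pos (mem_Icc.1 hl).2).trans hL) hK)
    exact sum_le_sum_of_subset_of_nonneg (filter_subset_filter _ (filter_subset _ _))
      fun f _ _ => pow_nonneg (one_add_bias_nonneg f) K
  · gcongr
    have : L < N ^ 2 := L.lt_two_pow_self.trans_le hL
    rw [Nat.card_Icc]
    exact_mod_cast (by omega : L + 1 - 10 ≤ N ^ 2)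

theorem sum_small_bias_le (hK : K ≤ binomLT m (r + 1)) :
    ∑ f ∈ codewords (degreeLT m (r + 1)) with
        bias f ≤ (1 / 2) ^ Nat.log 2 (binomLT m (r + 1) ^ 2), (1 + bias f) ^ K ≤
      2 ^ binomLT m (r + 1) * exp (2 / binomLT m (r + 1)) := by
  have hN := one_le_binomLT_succ m r
  set N := binomLT m (r + 1) with hNdef
  set L := Nat.log 2 (N ^ 2)
  have hL : (N : ℝ) ^ 2 ≤ 2 ^ L * 2 := by
    rw [← pow_succ]
    exact_mod_cast (Nat.lt_pow_succ_log_self one_lt_two (N ^ 2)).le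
  have hKL : K * (1 / 2 : ℝ) ^ L ≤ 2 / N := by
    have hK : (K : ℝ) ≤ N := Nat.cast_le.2 hK
    rw [one_div_pow, mul_one_div, div_le_div_iff₀ (by positivity) (by positivity)]
    nlinarith
  calc _ ≤ #{f ∈ codewords (degreeLT m (r + 1)) | bias f ≤ (1 / 2) ^ L} • exp (K * (1 / 2) ^ L) :=
        sum_le_card_nsmul _ _ _ fun f hf => one_add_bias_pow_le_exp (mem_filter.1 hf).2 K
    _ ≤ #(codewords (degreeLT m (r + 1))) * exp (2 / N) := by
        rw [nsmul_eq_mul]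
        gcongr
        exact filter_subset _ _
    _ = _ := by rw [card_codewords, finrank_degreeLT, Nat.cast_pow, Nat.cast_two]

theorem sum_one_add_bias_pow_le (hr : 1 ≤ r) (hm : 2 ^ 31 * r ≤ m) (hε0 : 0 ≤ ε)
    (hε : ε ≤ 1 / 2) (hK : K ≤ (1 - ε) * binomLT m (r + 1)) :
    ∑ f ∈ codewords (degreeLT m (r + 1)), (1 + bias f) ^ K ≤ 2 ^ binomLT m (r + 1) *
      ((r + 2) * exp (-(ε * log 2) * binomLT m (r + 1)) +
        binomLT m (r + 1) ^ 2 * (2 * exp (-(√(binomLT m (r + 1)) / 48))) +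
        exp (2 / binomLT m (r + 1))) := by
  have hKN : K ≤ binomLT m (r + 1) := by
    have := hK.trans (mul_le_of_le_one_left (Nat.cast_nonneg _) (by linarith))
    exact_mod_cast this
  have hlarge := sum_large_bias_le hr hm hε hK
  have hmedium := sum_medium_bias_le hr hm hKN
  have hsmall := sum_small_bias_le hKN
  have hrpow : (2 : ℝ) ^ ((1 - ε) * binomLT m (r + 1)) =
      2 ^ binomLT m (r + 1) * exp (-(ε * log 2) * binomLT m (r + 1)) := by
    rw [sub_mul, one_mul, sub_eq_add_neg, rpow_add two_pos, rpow_natCast, rpow_def_of_pos two_pos]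
    ring_nf
  rw [hrpow] at hlarge
  refine le_trans ?_ ((add_le_add hlarge (add_le_add hsmall hmedium)).trans_eq (by ring))
  rw [← sum_filter_add_sum_filter_not (codewords _) fun f => (1 / 2) ^ 9 ≤ bias f,
    ← sum_filter_add_sum_filter_not ({f ∈ codewords _ | ¬(1 / 2) ^ 9 ≤ bias f}) fun f =>
      bias f ≤ (1 / 2) ^ Nat.log 2 (binomLT m (r + 1) ^ 2)]
  refine add_le_add le_rfl (add_le_add ?_ ?_) <;>
    refine sum_le_sum_of_subset_of_nonneg (fun f hf => ?_) fun f _ _ =>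
      pow_nonneg (one_add_bias_nonneg f) K <;>
    simp only [mem_filter, not_le] at hf ⊢ <;> tauto

theorem tendsto_moment_bound {c : ℝ} (hc : 0 < c) :
    Tendsto (fun N : ℕ => (N + 2 : ℝ) * exp (-c * N) + N ^ 2 * (2 * exp (-(√N / 48))) +
      exp (2 / N)) atTop (𝓝 1) := by
  have hcast := tendsto_natCast_atTop_atTop (R := ℝ)
  have hlarge : Tendsto (fun N : ℕ => (N + 2 : ℝ) * exp (-c * N)) atTop (𝓝 0) := by
    have h1 := (tendsto_rpow_mul_exp_neg_mul_atTop_nhds_zero 1 c hc).comp hcast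
    have h0 := (tendsto_rpow_mul_exp_neg_mul_atTop_nhds_zero 0 c hc).comp hcast
    simpa [Function.comp_def, add_mul] using h1.add (h0.const_mul 2)
  have hmedium : Tendsto (fun N : ℕ => (N : ℝ) ^ 2 * (2 * exp (-(√N / 48)))) atTop (𝓝 0) := by
    have h4 := ((tendsto_rpow_mul_exp_neg_mul_atTop_nhds_zero 4 (1 / 48) (by norm_num)).comp
      (tendsto_sqrt_atTop.comp hcast)).const_mul 2
    rw [mul_zero] at h4
    refine h4.congr fun N => ?_
    have hsqrt : √(N : ℝ) ^ (4 : ℝ) = N ^ 2 := by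
      rw [← Nat.cast_ofNat, rpow_natCast, pow_mul _ 2 2, sq_sqrt N.cast_nonneg]
    simp only [Function.comp_apply, hsqrt]
    ring_nf
  have hsmall : Tendsto (fun N : ℕ => exp (2 / (N : ℝ))) atTop (𝓝 1) := by
    rw [← exp_zero]
    exact (continuous_exp.tendsto 0).comp (tendsto_const_nhds.div_atTop hcast)
  simpa using (hlarge.add hmedium).add hsmall

theorem exists_sum_one_add_bias_pow_le {ρ : ℝ} (hε0 : 0 < ε) (hε : ε ≤ 1 / 2) (hρ : 0 < ρ) :
    ∃ m₀ : ℕ, ∀ m ≥ m₀, ∀ r, 1 ≤ r → 2 ^ 31 * r ≤ m → ∀ K : ℕ,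
      K ≤ (1 - ε) * binomLT m (r + 1) →
        ∑ f ∈ codewords (degreeLT m (r + 1)), (1 + bias f) ^ K ≤
          2 ^ binomLT m (r + 1) * (1 + ρ) := by
  obtain ⟨m₀, hm₀⟩ := eventually_atTop.1
    ((tendsto_moment_bound (mul_pos hε0 (log_pos one_lt_two))).eventually_le_const
      (lt_add_of_pos_right 1 hρ))
  refine ⟨m₀, fun m hm r hr hrm K hK => (sum_one_add_bias_pow_le hr hrm hε0.le hε hK).trans ?_⟩
  have hmN : m ≤ binomLT m (r + 1) := by
    obtain ⟨t, rfl⟩ : ∃ t, r = t + 1 := ⟨r - 1, by omega⟩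
    simpa using mul_pow_le_binomLT (mul_binomLT_le_succ (Q := 1) (r := t + 1) (m := m) (by omega))
  have hrN : (r : ℝ) ≤ binomLT m (r + 1) := Nat.cast_le.2 (by omega)
  refine mul_le_mul_of_nonneg_left ((hm₀ _ (hm.trans hmN)).trans' ?_) (by positivity)
  gcongr

end Moment

section Counting

theorem choose_mul_pow_le {a b : ℕ} (hab : a ≤ b) (K : ℕ) :
    a.choose K * b ^ K ≤ b.choose K * a ^ K := by
  have hdesc : a.descFactorial K * b ^ K ≤ b.descFactorial K * a ^ K := by
    induction K with
    | zero => simp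
    | succ K ih =>
      have hstep : (a - K) * b ≤ (b - K) * a := by
        rw [Nat.sub_mul, Nat.sub_mul, mul_comm b a]
        exact Nat.sub_le_sub_left (Nat.mul_le_mul_left K hab) _
      calc a.descFactorial (K + 1) * b ^ (K + 1)
          = (a - K) * b * (a.descFactorial K * b ^ K) := by rw [Nat.descFactorial_succ]; ring
        _ ≤ (b - K) * a * (b.descFactorial K * a ^ K) := Nat.mul_le_mul hstep ih
        _ = b.descFactorial (K + 1) * a ^ (K + 1) := by rw [Nat.descFactorial_succ]; ring
  simp only [Nat.descFactorial_eq_factorial_mul_choose, mul_assoc] at hdesc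
  exact Nat.le_of_mul_le_mul_left hdesc K.factorial_pos

variable {α : Type*} [Fintype α] {V : Submodule (ZMod 2) (α → ZMod 2)} {K : ℕ}

theorem sum_card_codewords_vanishing [DecidableEq α] (V : Submodule (ZMod 2) (α → ZMod 2)) (K : ℕ) :
    ∑ Z ∈ powersetCard K univ, #{f ∈ codewords V | ∀ x ∈ Z, f x = 0} =
      ∑ f ∈ codewords V, (#{x | f x = 0}).choose K := by
  refine (sum_card_bipartiteAbove_eq_sum_card_bipartiteBelow
    fun (Z : Finset α) (f : α → ZMod 2) => ∀ x ∈ Z, f x = 0).trans (sum_congr rfl fun f _ => ?_)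
  rw [← card_powersetCard]
  congr 1
  ext Z
  simp [bipartiteBelow, mem_powersetCard, subset_iff, and_comm]

theorem natCard_vanishingOn [DecidableEq α] (Z : Finset α) :
    Nat.card (vanishingOn V Z) = #{f ∈ codewords V | ∀ x ∈ Z, f x = 0} := by
  refine (Nat.card_image_of_injective V.injective_subtype (vanishingOn V Z : Set V)).symm.trans ?_
  exact Nat.subtype_card _ fun f => by simp [mem_vanishingOn, and_comm]

theorem two_mul_two_pow_finrank_le [DecidableEq α] {Z : Finset α} [Decidable (Interpolates V Z)] :
    2 * 2 ^ finrank (ZMod 2) V ≤ #{f ∈ codewords V | ∀ x ∈ Z, f x = 0} * 2 ^ #Z +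
      if Interpolates V Z then 2 ^ finrank (ZMod 2) V else 0 := by
  have hmul := card_vanishingOn_mul (V := V) Z
  have hle := finrank_restrictTo_le (V := V) ((↑) : Z → α)
  rw [natCard_vanishingOn, Nat.card_zmod] at hmul
  rw [Fintype.card_coe] at hle
  split_ifs with hZ
  · rw [two_mul]
    gcongr
    rw [← hmul]
    gcongr
    exact one_le_two
  · rw [interpolates_iff_card_le_finrank, not_le] at hZ
    rw [← hmul, add_zero, mul_left_comm, ← pow_succ']
    gcongr
    · exact one_le_two
    · exact hZ

theorem choose_card_zeros_mul_le [Nonempty α] (f : α → ZMod 2) (K : ℕ) :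
    ((#{x | f x = 0}).choose K : ℝ) * 2 ^ K ≤ (Fintype.card α).choose K * (1 + bias f) ^ K := by
  have hzeros : 2 * (#{x | f x = 0} : ℝ) = (1 + bias f) * Fintype.card α := by
    have hsplit : (#{x | f x = 0} + hammingNorm f : ℝ) = Fintype.card α := by
      exact_mod_cast card_filter_add_card_filter_not fun x => f x = 0
    rw [bias_eq_one_sub, ← hsplit]
    have : (#{x | f x = 0} + hammingNorm f : ℝ) ≠ 0 := by rw [hsplit]; simp
    field_simp
    ring
  have hpos : (0 : ℝ) < Fintype.card α ^ K := pow_pos (Nat.cast_pos.2 Fintype.card_pos) K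
  refine le_of_mul_le_mul_right ?_ hpos
  calc _ = ((#{x | f x = 0}).choose K * Fintype.card α ^ K : ℝ) * 2 ^ K := by ring
    _ ≤ ((Fintype.card α).choose K * #{x | f x = 0} ^ K : ℝ) * 2 ^ K :=
        mul_le_mul_of_nonneg_right
          (by exact_mod_cast choose_mul_pow_le (card_le_univ {x | f x = 0}) K) (by positivity)
    _ = _ := by rw [mul_assoc, mul_assoc, ← mul_pow, ← mul_pow, mul_comm _ 2, hzeros]

theorem card_interpolates_ge [Nonempty α] [DecidablePred (Interpolates V)] {ρ : ℝ}
    (h : ∑ f ∈ codewords V, (1 + bias f) ^ K ≤ 2 ^ finrank (ZMod 2) V * (1 + ρ)) :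
    (1 - ρ) * ((Fintype.card α).choose K : ℕ) ≤
      #{Z ∈ powersetCard K univ | Interpolates V Z} := by
  classical
  set D := 2 ^ finrank (ZMod 2) V
  set M := (Fintype.card α).choose K
  have hlower : M * (2 * D) ≤ ∑ Z ∈ powersetCard K univ,
      #{f ∈ codewords V | ∀ x ∈ Z, f x = 0} * 2 ^ K +
        #{Z ∈ powersetCard K univ | Interpolates V Z} * D := by
    calc M * (2 * D) = #(powersetCard K (univ : Finset α)) • (2 * D) := by
          rw [card_powersetCard, card_univ, smul_eq_mul]
      _ ≤ ∑ Z ∈ powersetCard K univ, (#{f ∈ codewords V | ∀ x ∈ Z, f x = 0} * 2 ^ K +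
            if Interpolates V Z then D else 0) := card_nsmul_le_sum _ _ _ fun Z hZ => by
          simpa only [(mem_powersetCard.1 hZ).2] using two_mul_two_pow_finrank_le (V := V) (Z := Z)
      _ = _ := by rw [sum_add_distrib, ← sum_filter, sum_const, smul_eq_mul]
  have hupper : (∑ Z ∈ powersetCard K univ,
      #{f ∈ codewords V | ∀ x ∈ Z, f x = 0} * 2 ^ K : ℕ) ≤ M * (D * (1 + ρ)) := by
    rw [← sum_mul, sum_card_codewords_vanishing, sum_mul]
    push_cast
    refine (sum_le_sum fun f _ => choose_card_zeros_mul_le f K).trans ?_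
    rw [← mul_sum]
    gcongr
    exact_mod_cast h
  have hD0 : (0 : ℝ) < D := by positivity
  refine le_of_mul_le_mul_left ?_ hD0
  rify at hlower hupper
  linarith

end Counting

section Decoding

variable {m r : ℕ}

theorem sum_filter_ne_zero_eq {α : Type*} [Fintype α] (u q : α → ZMod 2) :
    ∑ x with u x ≠ 0, q x = ∑ x, u x * q x := by
  rw [sum_filter]
  refine sum_congr rfl fun x _ => ?_
  obtain h | h := eq_zero_or_eq_one (u x) <;> simp [h]

theorem eq_zero_of_hammingNorm_add_le (hm : 2 * r + 2 ≤ m) {e d : Cube m → ZMod 2}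
    (he : Interpolates (degreeLT m (r + 1)) {x | e x ≠ 0})
    (hd : d ∈ degreeLT m (m - 2 * r - 2 + 1)) (hle : hammingNorm (e + d) ≤ hammingNorm e) :
    d = 0 := by
  have hsupp : univ.filter (e · ≠ 0) = univ.filter ((e + d) · ≠ 0) := by
    refine eq_of_sum_mul_eq (Q := degreeLT m 2) he hle (one_mem_degreeLT m r) (one_mem_degreeLT m 1)
      (fun x y hxy => funext fun i => hxy _ (coord_mem_degreeLT i)) fun f hf g hg q hq => ?_
    have hdeg : d * (f * (g * q)) ∈ degreeLT m m := by
      convert mul_mem_degreeLT hd (mul_mem_degreeLT hf (mul_mem_degreeLT hg hq)) using 2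
      omega
    have hsum := sum_eq_zero_of_mem_degreeLT hdeg
    simp only [sum_filter_ne_zero_eq, Pi.add_apply, Pi.mul_apply, add_mul, sum_add_distrib,
      mul_assoc] at hsum ⊢
    rw [hsum, add_zero]
  have hbit : ∀ a b : ZMod 2, (a ≠ 0 ↔ a + b ≠ 0) → b = 0 := by decide
  exact funext fun x => hbit (e x) (d x) (by simpa using Finset.ext_iff.1 hsupp x)

theorem hammingDist_lt_of_interpolates (hm : 2 * r + 2 ≤ m) {Z : Finset (Cube m)}
    (hZ : Interpolates (degreeLT m (r + 1)) Z) {p p' e : Cube m → ZMod 2}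
    (hp : p ∈ degreeLT m (m - 2 * r - 2 + 1)) (hp' : p' ∈ degreeLT m (m - 2 * r - 2 + 1))
    (he : {x | e x ≠ 0} ⊆ (Z : Set (Cube m))) (hne : p' ≠ p) :
    hammingDist p (p + e) < hammingDist p' (p + e) := by
  have hdist : ∀ q : Cube m → ZMod 2, hammingDist q (p + e) = hammingNorm (e + (p - q)) :=
    fun q => by rw [hammingDist_eq_hammingNorm]; congr 1; abel
  rw [hdist, hdist, sub_self, add_zero]
  by_contra! hle
  refine hne (sub_eq_zero.1 (eq_zero_of_hammingNorm_add_le hm (hZ.subset fun x hx => ?_)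
    (sub_mem hp hp') hle)).symm
  exact he (mem_filter.1 hx).2

end Decoding

end ReedMuller

/-- high-degree RM codes under errors.
There is an absolute constant `γ₀ > 0` such that for every `ε ∈ (0,1)` and `ρ > 0`
there is `m₀` such that for all `m ≥ m₀` and `1 ≤ r < γ₀ m`, setting
`K = ⌊(1-ε)·binom(m,≤r)⌋`, a uniformly random `K`-element subset `Z ⊆ F₂^m`
satisfies, with probability at least `1 - ρ`: for every codeword of
`RM(m, m-2r-2)` (the evaluation vector of a multilinear polynomial `c` of degree
at most `m-2r-2`) and every error vector `e` supported inside `Z`, that codeword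
is the unique codeword at minimal Hamming distance from the received word. -/
theorem high_degree_RM_under_BSC :
    ∃ γ₀ : ℝ, 0 < γ₀ ∧
      ∀ ε : ℝ, 0 < ε → ε < 1 →
        ∀ ρ : ℝ, 0 < ρ →
          ∃ m₀ : ℕ, ∀ m : ℕ, m₀ ≤ m →
            ∀ r : ℕ, 1 ≤ r → (r : ℝ) < γ₀ * m →
              ∀ K : ℕ, K = ⌊(1 - ε) * (binomLe m r : ℝ)⌋₊ →
                (1 - ρ) *
                    (Nat.card {Z : Finset (Fin m → ZMod 2) // Z.card = K} : ℝ)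
                  ≤ (Nat.card {Z : Finset (Fin m → ZMod 2) //
                      Z.card = K ∧
                      ∀ c : RMcode m (m - 2 * r - 2),
                        ∀ e : (Fin m → ZMod 2) → ZMod 2,
                          {x : Fin m → ZMod 2 | e x ≠ 0} ⊆
                              (Z : Set (Fin m → ZMod 2)) →
                            ∀ c' : RMcode m (m - 2 * r - 2),
                              (fun x => evalLin m (m - 2 * r - 2) x c') ≠
                                  (fun x => evalLin m (m - 2 * r - 2) x c) →
                                hammingDist
                                    (fun x => evalLin m (m - 2 * r - 2) x c)
                                    ((fun x => evalLin m (m - 2 * r - 2) x c) + e) <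
                                  hammingDist
                                    (fun x => evalLin m (m - 2 * r - 2) x c')
                                    ((fun x => evalLin m (m - 2 * r - 2) x c) + e)} : ℝ) := by
  refine ⟨1 / 2 ^ 31, by positivity, fun ε hε hε1 ρ hρ => ?_⟩
  obtain ⟨m₀, hm₀⟩ := ReedMuller.exists_sum_one_add_bias_pow_le
    (lt_min hε one_half_pos) (min_le_right ε (1 / 2)) hρ
  refine ⟨m₀, fun m hm r hr hrm K hK => ?_⟩
  have hrm : 2 ^ 31 * r ≤ m := by
    rw [one_div_mul_eq_div, lt_div_iff₀' (by positivity)] at hrm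
    exact_mod_cast hrm.le
  have hK : (K : ℝ) ≤ (1 - min ε (1 / 2)) * ReedMuller.binomLT m (r + 1) := by
    rw [hK]
    refine (Nat.floor_le (mul_nonneg (by linarith) (Nat.cast_nonneg _))).trans ?_
    exact mul_le_mul_of_nonneg_right (by linarith [min_le_left ε (1 / 2)]) (Nat.cast_nonneg _)
  have hmoment := hm₀ m hm r hr hrm K hK
  rw [← ReedMuller.finrank_degreeLT] at hmoment
  classical
  rw [Nat.card_eq_fintype_card, Fintype.card_finset_len]
  refine (ReedMuller.card_interpolates_ge hmoment).trans (Nat.cast_le.2 ?_)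
  rw [← Nat.subtype_card _ fun _ => by rw [Finset.mem_filter, Finset.mem_powersetCard_univ]]
  exact Nat.card_le_card_of_injective (Subtype.map id fun Z hZ => ⟨hZ.1, fun c e he c' hne =>
    ReedMuller.hammingDist_lt_of_interpolates (by omega) hZ.2
      (ReedMuller.evalLin_mem_degreeLT c) (ReedMuller.evalLin_mem_degreeLT c') he hne⟩)
    (Subtype.map_injective _ Function.injective_id)
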